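/- arXiv:2306.02721 — 8 statements merged into one kernel-verified Lean document; each statement's English description precedes it below -/
import Mathlib

section
/- For every positive integer t there exists a constant K(t) such that the following holds: for every finite group N, every group homomorphism φ : Z_2 → Aut(N), and every balanced subset S of (N ⋊_φ Z_2) \ {(0,0)} of size k ≥ K(t), the set S admits an alternating parity t-weak sequencing. -/
abbrev Z2 : Type := Multiplicative (ZMod 2)

/-- The partial-sums condition for a `t`-weak sequencing of the list `l`. -/
def WeakSeqList {G : Type*} [Group G] (t : ℕ) (l : List G) : Prop :=
  ∀ i j : ℕ, i < j → j ≤ l.length → j - i ≤ t →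
    (l.take i).prod ≠ (l.take j).prod

/-- `l` is an ordering of the finite set `S`. -/
def IsOrderingOf {G : Type*} [Group G] (l : List G) (S : Finset G) : Prop :=
  l.Nodup ∧ ∀ x, x ∈ l ↔ x ∈ S

/-- Consecutive elements of `l` alternate between even and odd. -/
def AltList {N : Type*} [Group N] {φ : Z2 →* MulAut N}
    (l : List (N ⋊[φ] Z2)) : Prop :=
  l.Chain' (fun a b => a.right ≠ b.right)

/-- Number of even elements of `S`. -/
def evenCount {N : Type*} [Group N] {φ : Z2 →* MulAut N}
    (S : Finset (N ⋊[φ] Z2)) : ℕ :=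
  (S.filter (fun g => g.right = 1)).card

/-- `S` has type `(a, b)`. -/
def HasType {N : Type*} [Group N] {φ : Z2 →* MulAut N}
    (S : Finset (N ⋊[φ] Z2)) (a b : ℕ) : Prop :=
  evenCount S = a ∧ S.card = a + b

section aux
open Classical

def WP {G : Type*} [Group G] (f : ℕ → G) (a : ℕ) : ℕ → G
  | 0 => 1
  | n + 1 => WP f a n * f (a + n)

theorem WP_add {G : Type*} [Group G] (f : ℕ → G) (a n m : ℕ) :
    WP f a (n + m) = WP f a n * WP f (a + n) m := by
  induction m with
  | zero => simp [WP]
  | succ k ih => rw [← Nat.add_assoc, WP, ih, WP, mul_assoc, Nat.add_assoc]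

theorem WP_congr {G : Type*} [Group G] (f g : ℕ → G) (a n : ℕ)
    (h : ∀ i, a ≤ i → i < a + n → f i = g i) : WP f a n = WP g a n := by
  induction n with
  | zero => rfl
  | succ k ih =>
    rw [WP, WP, ih (fun i h1 h2 => h i h1 (by omega)), h (a + k) (by omega) (by omega)]

def GoodF {G : Type*} [Group G] (t : ℕ) (f : ℕ → G) (L : ℕ) : Prop :=
  ∀ a n, 0 < n → n ≤ t → a + n ≤ L → WP f a n ≠ 1

structure St {G : Type*} [Group G] (t : ℕ) (S : Finset G) (p : G → ℕ) (f : ℕ → G) (L : ℕ) :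
    Prop where
  mem : ∀ i, i < L → f i ∈ S
  inj : ∀ i j, i < L → j < L → f i = f j → i = j
  col : ∀ i, i < L → p (f i) = i % 2
  good : GoodF t f L

/-- values forbidden at position `L` -/
noncomputable def forb {G : Type*} [Group G] (t : ℕ) (f : ℕ → G) (L : ℕ) : Finset G :=
  ((Finset.range t).filter (fun n => n ≤ L)).image (fun n => (WP f (L - n) n)⁻¹)

theorem forb_card {G : Type*} [Group G] (t : ℕ) (f : ℕ → G) (L : ℕ) :
    (forb t f L).card ≤ t := by
  refine Finset.card_image_le.trans ((Finset.card_filter_le _ _).trans ?_)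
  simp

theorem forb_spec {G : Type*} [Group G] (t : ℕ) (f : ℕ → G) (L : ℕ) (y : G)
    (hy : y ∉ forb t f L) (a n : ℕ) (hn : n < t) (ha : a + n = L) : WP f a n * y ≠ 1 := by
  intro h
  apply hy
  refine Finset.mem_image.2 ⟨n, by simp; omega, ?_⟩
  have : L - n = a := by omega
  rw [this]
  exact (eq_inv_of_mul_eq_one_right h).symm

noncomputable def used {G : Type*} (f : ℕ → G) (L : ℕ) : Finset G :=
  (Finset.range (L / 2)).image (fun k => f (2 * k + L % 2))

theorem used_card {G : Type*} (f : ℕ → G) (L : ℕ) :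
    (used f L).card ≤ L / 2 := by
  refine Finset.card_image_le.trans ?_
  simp

theorem used_spec {G : Type*} [Group G] {t : ℕ} {S : Finset G} {p : G → ℕ} {f : ℕ → G} {L : ℕ}
    (h : St t S p f L) (y : G) (hp : p y = L % 2) (hy : y ∉ used f L) :
    ∀ i, i < L → f i ≠ y := by
  intro i hi e
  apply hy
  have h1 := h.col i hi
  rw [e, hp] at h1
  refine Finset.mem_image.2 ⟨i / 2, by simp; omega, ?_⟩
  rw [← e]
  congr 1
  omega

/-- append `y` -/
theorem St.append {G : Type*} [Group G] {t : ℕ} {S : Finset G} {p : G → ℕ} {f : ℕ → G} {L : ℕ}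
    (h : St t S p f L) (y : G) (hS : y ∈ S) (hp : p y = L % 2) (hu : ∀ i, i < L → f i ≠ y)
    (hf : y ∉ forb t f L) : St t S p (Function.update f L y) (L + 1) := by
  have key : ∀ i, i < L → Function.update f L y i = f i := by
    intro i hi
    exact Function.update_of_ne (by omega) _ _
  have keyL : Function.update f L y L = y := Function.update_self _ _ _
  constructor
  · intro i hi
    rcases Nat.lt_succ_iff_lt_or_eq.1 hi with h1 | rfl
    · rw [key i h1]; exact h.mem i h1
    · rw [keyL]; exact hS
  · intro i j hi hj e
    rcases Nat.lt_succ_iff_lt_or_eq.1 hi with h1 | rfl <;>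
    rcases Nat.lt_succ_iff_lt_or_eq.1 hj with h2 | rfl
    · rw [key i h1, key j h2] at e; exact h.inj i j h1 h2 e
    · rw [key i h1, keyL] at e; exact absurd e (hu i h1)
    · rw [key j h2, keyL] at e; exact absurd e.symm (hu j h2)
    · rfl
  · intro i hi
    rcases Nat.lt_succ_iff_lt_or_eq.1 hi with h1 | rfl
    · rw [key i h1]; exact h.col i h1
    · rw [keyL]; exact hp
  · intro a n hn hnt ha
    rcases Nat.lt_or_ge L (a + n) with h1 | h1
    · obtain ⟨k, rfl⟩ : ∃ k, n = k + 1 := ⟨n - 1, by omega⟩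
      have e : a + k = L := by omega
      rw [WP, e, keyL, WP_congr _ f a k (fun i _ h2 => key i (by omega))]
      exact forb_spec t f L y hf a k (by omega) e
    · rw [WP_congr _ f a n (fun i _ h2 => key i (by omega))]
      exact h.good a n hn hnt h1

def HalfS {G : Type*} (S : Finset G) (p : G → ℕ) (m : ℕ) : Prop :=
  ∀ c, c < 2 → (S.filter (fun g => p g = c)).card = m

theorem St.ext {G : Type*} [Group G] {t : ℕ} {S : Finset G} {p : G → ℕ} {f : ℕ → G} {L m : ℕ}
    (hm : HalfS S p m) (h : St t S p f L) (X : Finset G) (hX : L / 2 + t + X.card < m) :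
    ∃ y, y ∉ X ∧ y ∈ S ∧ St t S p (Function.update f L y) (L + 1) := by
  have h1 : (used f L ∪ forb t f L ∪ X).card < (S.filter (fun g => p g = L % 2)).card := by
    rw [hm _ (Nat.mod_lt _ (by norm_num))]
    have a1 := Finset.card_union_le (used f L ∪ forb t f L) X
    have a2 := Finset.card_union_le (used f L) (forb t f L)
    have a3 := used_card f L
    have a4 := forb_card t f L
    omega
  obtain ⟨y, hy, hy'⟩ := Finset.exists_mem_notMem_of_card_lt_card h1
  simp only [Finset.mem_filter] at hy
  simp only [Finset.mem_union, not_or] at hy'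
  exact ⟨y, hy'.2, hy.1, h.append y hy.1 hy.2 (used_spec h y hy.2 hy'.1.1) hy'.1.2⟩

theorem St.extTo {G : Type*} [Group G] {t : ℕ} {S : Finset G} {p : G → ℕ} {f : ℕ → G} {L m : ℕ}
    (hm : HalfS S p m) (h : St t S p f L) (k : ℕ) (hk : L + k ≤ 2 * (m - t)) :
    ∃ f', (∀ i, i < L → f' i = f i) ∧ St t S p f' (L + k) := by
  induction k with
  | zero => exact ⟨f, fun _ _ => rfl, h⟩
  | succ k ih =>
    obtain ⟨f', h1, h2⟩ := ih (by omega)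
    obtain ⟨y, _, _, h3⟩ := h2.ext hm ∅ (by simp; omega)
    refine ⟨_, fun i hi => ?_, h3⟩
    rw [Function.update_of_ne (by omega), h1 i hi]

/-- place `h` at `L+1` -/
theorem St.place {G : Type*} [Group G] {t : ℕ} {S : Finset G} {p : G → ℕ} {f : ℕ → G} {L m : ℕ}
    (hm : HalfS S p m) (h : St t S p f L) (x : G) (hx : x ∈ S) (hx1 : x ≠ 1)
    (hp : p x = (L + 1) % 2) (hu : ∀ i, i < L → f i ≠ x) (hL : L / 2 + t + (t + 1) < m) :
    ∃ f', (∀ i, i < L → f' i = f i) ∧ St t S p f' (L + 2) ∧ f' (L + 1) = x := by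
  let X : Finset G := insert x ((Finset.range t).image (fun n => (WP f (L - n) n)⁻¹ * x⁻¹))
  have hX : X.card ≤ t + 1 := by
    refine (Finset.card_insert_le _ _).trans ?_
    have := Finset.card_image_le (s := Finset.range t) (f := fun n => (WP f (L - n) n)⁻¹ * x⁻¹)
    simp only [Finset.card_range] at this
    omega
  obtain ⟨y, hyX, hyS, h2⟩ := h.ext hm X (by omega)
  have key : ∀ i, i < L → Function.update f L y i = f i := by
    intro i hi
    exact Function.update_of_ne (by omega) _ _
  have keyL : Function.update f L y L = y := Function.update_self _ _ _
  simp only [X, Finset.mem_insert, not_or] at hyX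
  refine ⟨Function.update (Function.update f L y) (L + 1) x, ?_, h2.append x hx hp ?_ ?_, ?_⟩
  · intro i hi
    rw [Function.update_of_ne (by omega), key i hi]
  · intro i hi
    rcases Nat.lt_succ_iff_lt_or_eq.1 hi with h1 | rfl
    · rw [key i h1]; exact hu i h1
    · rw [keyL]; exact hyX.1
  · intro hmem
    obtain ⟨n, hn, e⟩ := Finset.mem_image.1 hmem
    simp only [Finset.mem_range, Finset.mem_filter] at hn
    rcases n with _ | k
    · simp [WP] at e; exact hx1 e.symm
    · apply hyX.2
      refine Finset.mem_image.2 ⟨k, by simp; omega, ?_⟩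
      have e1 : L + 1 - (k + 1) = L - k := by omega
      have e2 : L - k + k = L := by omega
      rw [e1, WP, e2, keyL, WP_congr _ f _ _ (fun i _ h2 => key i (by omega))] at e
      rw [← e]
      group
  · simp

theorem St.place' {G : Type*} [Group G] {t : ℕ} {S : Finset G} {p : G → ℕ} {f : ℕ → G} {L m : ℕ}
    (hm : HalfS S p m) (hp2 : ∀ g, p g < 2)
    (h : St t S p f L) (x : G) (hx : x ∈ S) (hx1 : x ≠ 1)
    (hL : (L + 1) / 2 + t + (t + 1) < m) :
    ∃ f' L', L ≤ L' ∧ L' ≤ L + 3 ∧ (∀ i, i < L → f' i = f i) ∧ St t S p f' L' ∧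
      ∃ i, i < L' ∧ f' i = x := by
  by_cases hu : ∀ i, i < L → f i ≠ x
  · by_cases hp : p x = (L + 1) % 2
    · obtain ⟨f', h1, h2, h3⟩ := h.place hm x hx hx1 hp hu (by omega)
      exact ⟨f', L + 2, by omega, by omega, h1, h2, L + 1, by omega, h3⟩
    · obtain ⟨y, hy, _, h1⟩ := h.ext hm {x} (by simp; omega)
      have := hp2 x
      obtain ⟨f', h2, h3, h4⟩ := h1.place hm x hx hx1 (by omega) (by
        intro i hi
        rcases Nat.lt_succ_iff_lt_or_eq.1 hi with h1 | rfl
        · rw [Function.update_of_ne (by omega)]; exact hu i h1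
        · rw [Function.update_self]; simpa using hy) (by omega)
      refine ⟨f', L + 3, by omega, by omega, ?_, h3, L + 2, by omega, h4⟩
      intro i hi
      rw [h2 i (by omega), Function.update_of_ne (by omega)]
  · push Not at hu
    obtain ⟨i, hi, e⟩ := hu
    exact ⟨f, L, le_rfl, by omega, fun _ _ => rfl, h, i, hi, e⟩

theorem St.placeAll {G : Type*} [Group G] {t : ℕ} {S : Finset G} {p : G → ℕ} {f : ℕ → G}
    {L m : ℕ} (hm : HalfS S p m) (hp2 : ∀ g, p g < 2) (h1S : (1 : G) ∉ S)
    (h : St t S p f L) (H : Finset G) : H ⊆ S → L + 3 * H.card + 2 * t + 4 < m →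
    ∃ f' L', L ≤ L' ∧ L' ≤ L + 3 * H.card ∧ (∀ i, i < L → f' i = f i) ∧ St t S p f' L' ∧
      ∀ x ∈ H, ∃ i, i < L' ∧ f' i = x := by
  induction H using Finset.induction_on with
  | empty =>
    intro _ _
    exact ⟨f, L, le_rfl, by omega, fun _ _ => rfl, h, by simp⟩
  | insert x H hxH ih =>
    intro hHS hL
    rw [Finset.card_insert_of_notMem hxH] at hL ⊢
    have hxS : x ∈ S := hHS (Finset.mem_insert_self _ _)
    obtain ⟨f1, L1, a1, a2, a3, a4, a5⟩ :=
      ih ((Finset.subset_insert _ _).trans hHS) (by omega)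
    obtain ⟨f2, L2, b1, b2, b3, b4, b5⟩ := a4.place' hm hp2 x hxS
      (fun e => h1S (e ▸ hxS)) (by omega)
    refine ⟨f2, L2, by omega, by omega, ?_, b4, ?_⟩
    · intro i hi
      rw [b3 i (by omega), a3 i hi]
    · intro z hz
      rcases Finset.mem_insert.1 hz with rfl | hz
      · exact b5
      · obtain ⟨i, hi, e⟩ := a5 z hz
        exact ⟨i, by omega, by rw [b3 i hi, e]⟩

noncomputable def badS {G : Type*} [Group G] (t : ℕ) (f : ℕ → G) (L : ℕ) : Finset G :=
  (Finset.range L ×ˢ (Finset.range L ×ˢ Finset.range (t + 1))).image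
    (fun q => (WP f q.2.1 (q.1 - q.2.1))⁻¹ * (WP f (q.1 + 1) (q.2.1 + q.2.2 - (q.1 + 1)))⁻¹)

theorem badS_card {G : Type*} [Group G] (t : ℕ) (f : ℕ → G) (L : ℕ) :
    (badS t f L).card ≤ L * (L * (t + 1)) := by
  refine Finset.card_image_le.trans ?_
  simp [Finset.card_product]

theorem badS_spec {G : Type*} [Group G] (t : ℕ) (f : ℕ → G) (L : ℕ) (hf : GoodF t f L)
    (x : G) (hx : x ∉ badS t f L) (j : ℕ) : GoodF t (Function.update f j x) L := by
  intro a n hn hnt ha e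
  by_cases hj : a ≤ j ∧ j < a + n
  · apply hx
    refine Finset.mem_image.2 ⟨(j, a, n), by simp; omega, ?_⟩
    obtain ⟨u, rfl⟩ : ∃ u, j = a + u := ⟨j - a, by omega⟩
    obtain ⟨v, rfl⟩ : ∃ v, n = u + 1 + v := ⟨n - u - 1, by omega⟩
    rw [WP_add, WP, Function.update_self,
      WP_congr _ f a u (fun i _ _ => Function.update_of_ne (by omega) _ _),
      WP_congr _ f _ v (fun i _ _ => Function.update_of_ne (by omega) _ _)] at e
    have e1 : a + u - a = u := by omega
    have e2 : a + (u + 1 + v) - (a + u + 1) = v := by omega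
    simp only [e1, e2]
    rw [← Nat.add_assoc a u 1] at e
    have := eq_inv_of_mul_eq_one_left e
    rw [← this]
    group
  · rw [WP_congr _ f a n (fun i _ _ => Function.update_of_ne (by omega) _ _)] at e
    exact hf a n hn hnt ha e

theorem slot_ne (t s s' c c' : ℕ) (h : s ≠ s') (hc : c < 2) (hc' : c' < 2) :
    2 * (t + 1) * s + c + t < 2 * (t + 1) * s' + c' ∨
    2 * (t + 1) * s' + c' + t < 2 * (t + 1) * s + c := by
  rcases Nat.lt_or_gt_of_ne h with h | h
  · left
    have : 2 * (t + 1) * (s + 1) ≤ 2 * (t + 1) * s' := Nat.mul_le_mul_left _ h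
    rw [Nat.mul_add] at this
    omega
  · right
    have : 2 * (t + 1) * (s' + 1) ≤ 2 * (t + 1) * s := Nat.mul_le_mul_left _ h
    rw [Nat.mul_add] at this
    omega

/-- Invariant for the final phase. -/
structure Fin4 {G : Type*} [Group G] (t : ℕ) (S : Finset G) (p : G → ℕ) (f0 : ℕ → G) (M : ℕ)
    (f : ℕ → G) (L : ℕ) (U : Finset ℕ) : Prop where
  st : St t S p f L
  len : 2 * (t + 1) * M ≤ L
  agree : ∀ i, i < 2 * (t + 1) * M → (∀ s ∈ U, ∀ c, c < 2 → i ≠ 2 * (t + 1) * s + c) → f i = f0 i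
  pool : ∀ x ∈ S, (∀ i, i < L → f i ≠ x) → ∀ j, GoodF t (Function.update f0 j x) (2 * (t + 1) * M)

theorem Fin4.step {G : Type*} [Group G] {t : ℕ} {S : Finset G} {p : G → ℕ} {f0 : ℕ → G} {M : ℕ}
    {f : ℕ → G} {L m : ℕ} {U : Finset ℕ} (hm : HalfS S p m)
    (h : Fin4 t S p f0 M f L U) (hL : L < 2 * m) (hU : U.card + t < M) :
    ∃ f' s, Fin4 t S p f0 M f' (L + 1) (insert s U) := by
  have hc : L % 2 < 2 := Nat.mod_lt _ (by norm_num)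
  -- the element to be placed
  obtain ⟨x, hx, hxu⟩ : ∃ x ∈ S.filter (fun g => p g = L % 2), x ∉ used f L := by
    apply Finset.exists_mem_notMem_of_card_lt_card
    rw [hm _ hc]
    have := used_card f L
    omega
  simp only [Finset.mem_filter] at hx
  have hxn := used_spec h.st x hx.2 hxu
  have hslot : ∀ s, s < M → 2 * (t + 1) * s + L % 2 + t < 2 * (t + 1) * M := by
    intro s hs
    have : 2 * (t + 1) * (s + 1) ≤ 2 * (t + 1) * M := Nat.mul_le_mul_left _ hs
    rw [Nat.mul_add] at this
    omega
  have hlen := h.len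
  -- the slot
  obtain ⟨s, hsM, hsU, hsf⟩ : ∃ s, s < M ∧ s ∉ U ∧ f (2 * (t + 1) * s + L % 2) ∉ forb t f L := by
    have h1 : (Finset.range M \ U).card ≥ M - U.card := by
      have := Finset.le_card_sdiff U (Finset.range M)
      simpa using this
    have h2 : ((Finset.range M \ U).image (fun s => f (2 * (t + 1) * s + L % 2))).card
        = (Finset.range M \ U).card := by
      apply Finset.card_image_of_injOn
      intro s hs s' hs' e
      simp only [Finset.coe_sdiff, Finset.coe_range, Set.mem_diff, Set.mem_Iio] at hs hs'
      by_contra hne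
      have a1 := hslot s hs.1
      have a2 := hslot s' hs'.1
      have a3 := h.st.inj _ _ (by omega) (by omega) e
      have a4 := slot_ne t s s' (L % 2) (L % 2) hne hc hc
      omega
    have h3 := forb_card t f L
    obtain ⟨z, hz, hz'⟩ := Finset.exists_mem_notMem_of_card_lt_card
      (s := forb t f L) (t := (Finset.range M \ U).image (fun s => f (2 * (t + 1) * s + L % 2)))
      (by omega)
    obtain ⟨s, hs, rfl⟩ := Finset.mem_image.1 hz
    simp only [Finset.mem_sdiff, Finset.mem_range] at hs
    exact ⟨s, hs.1, hs.2, hz'⟩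
  have hj := hslot s hsM
  have hjm : (2 * (t + 1) * s + L % 2) % 2 = L % 2 := by
    rw [Nat.mul_assoc]
    omega
  have hfar : ∀ s' ∈ U, ∀ c, c < 2 → 2 * (t + 1) * s + L % 2 + t < 2 * (t + 1) * s' + c ∨
      2 * (t + 1) * s' + c + t < 2 * (t + 1) * s + L % 2 := by
    intro s' hs' c hc'
    exact slot_ne t s s' _ _ (fun e => hsU (e ▸ hs')) hc hc'
  have hagree : ∀ i, i < 2 * (t + 1) * M →
      (∀ s' ∈ insert s U, ∀ c, c < 2 → i ≠ 2 * (t + 1) * s' + c) →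
      f i = f0 i ∧ i ≠ 2 * (t + 1) * s + L % 2 := by
    intro i hi h2
    refine ⟨h.agree i hi (fun s' hs' => h2 s' (Finset.mem_insert_of_mem hs')), ?_⟩
    exact h2 s (Finset.mem_insert_self _ _) _ hc
  generalize 2 * (t + 1) * s + L % 2 = j at *
  let f' := Function.update (Function.update f j x) L (f j)
  have kL : f' L = f j := Function.update_self _ _ _
  have kj : f' j = x := by
    simp only [f']
    rw [Function.update_of_ne (by omega), Function.update_self]
  have kk : ∀ i, i ≠ L → i ≠ j → f' i = f i := by
    intro i h1 h2
    simp only [f']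
    rw [Function.update_of_ne h1, Function.update_of_ne h2]
  clear_value f'
  have hjL : j < L := by omega
  refine ⟨f', s, ⟨⟨?_, ?_, ?_, ?_⟩, by omega, ?_, ?_⟩⟩
  · intro i hi
    by_cases h1 : i = L
    · rw [h1, kL]; exact h.st.mem j hjL
    by_cases h2 : i = j
    · rw [h2, kj]; exact hx.1
    rw [kk i h1 h2]; exact h.st.mem i (by omega)
  · have hinj := h.st.inj
    intro i i' hi hi' e
    by_cases h1 : i = L <;> by_cases h1' : i' = L <;> by_cases h2 : i = j <;>
      by_cases h2' : i' = j <;> grind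
  · intro i hi
    by_cases h1 : i = L
    · rw [h1, kL, h.st.col j hjL, hjm]
    by_cases h2 : i = j
    · rw [h2, kj, hx.2, hjm]
    rw [kk i h1 h2]; exact h.st.col i (by omega)
  · intro a n hn hnt ha
    rcases Nat.lt_or_ge L (a + n) with h1 | h1
    · obtain ⟨k, rfl⟩ : ∃ k, n = k + 1 := ⟨n - 1, by omega⟩
      have e : a + k = L := by omega
      rw [WP, e, kL, WP_congr _ f a k (fun i _ h2 => kk i (by omega) (by omega))]
      exact forb_spec t f L _ hsf a k (by omega) e
    · by_cases hja : a ≤ j ∧ j < a + n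
      · rw [WP_congr _ (Function.update f0 j x) a n]
        · exact h.pool x hx.1 hxn j a n hn hnt (by omega)
        · intro i h3 h4
          by_cases h2 : i = j
          · rw [h2, kj, Function.update_self]
          rw [kk i (by omega) h2, Function.update_of_ne h2]
          apply h.agree i (by omega)
          intro s' hs' c hc'
          have := hfar s' hs' c hc'
          omega
      · rw [WP_congr _ f a n (fun i _ h2 => kk i (by omega) (by omega))]
        exact h.st.good a n hn hnt h1
  · intro i hi h2
    obtain ⟨h3, h4⟩ := hagree i hi h2
    rw [kk i (by omega) h4, h3]
  · intro z hz hzn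
    apply h.pool z hz
    intro i hi
    by_cases h2 : i = j
    · rw [h2, ← kL]; exact hzn L (by omega)
    · rw [← kk i (by omega) h2]; exact hzn i (by omega)

theorem Fin4.finish {G : Type*} [Group G] {t : ℕ} {S : Finset G} {p : G → ℕ} {f0 : ℕ → G} {M : ℕ}
    {f : ℕ → G} {L m : ℕ} (hm : HalfS S p m)
    (h : Fin4 t S p f0 M f L ∅) (k : ℕ) (hL : L + k ≤ 2 * m) (hU : k + t < M) :
    ∃ f' U, U.card ≤ k ∧ Fin4 t S p f0 M f' (L + k) U := by
  induction k with
  | zero => exact ⟨f, ∅, by simp, h⟩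
  | succ k ih =>
    obtain ⟨f1, U, a1, a2⟩ := ih (by omega) (by omega)
    obtain ⟨f2, s, b⟩ := a2.step hm (by omega) (by omega)
    exact ⟨f2, insert s U, (Finset.card_insert_le _ _).trans (by omega), b⟩

theorem main_exists {G : Type*} [Group G] (t : ℕ) (S : Finset G) (p : G → ℕ) (m : ℕ)
    (hm : HalfS S p m) (hp2 : ∀ g, p g < 2) (h1S : (1 : G) ∉ S)
    (A B : ℕ) (hA : A = 2 * (t + 1) * (3 * t + 1)) (hB : B = A * (A * (t + 1)))
    (hK : A + 3 * B + 4 * t + 10 ≤ m) : ∃ f, St t S p f (2 * m) := by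
  have s0 : St t S p (fun _ => 1) 0 :=
    ⟨by simp, by simp, by simp, fun a n h1 _ h2 => by omega⟩
  obtain ⟨f0, -, s1⟩ := s0.extTo hm A (by omega)
  rw [Nat.zero_add] at s1
  have hb := badS_card t f0 A
  rw [← hB] at hb
  have hH : ((badS t f0 A).filter (· ∈ S)).card ≤ B := (Finset.card_filter_le _ _).trans hb
  obtain ⟨f1, L1, a1, a2, a3, a4, a5⟩ := s1.placeAll hm hp2 h1S
    ((badS t f0 A).filter (· ∈ S)) (fun x hx => (Finset.mem_filter.1 hx).2) (by omega)
  obtain ⟨f2, b1, b2⟩ := a4.extTo hm (2 * (m - t) - L1) (by omega)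
  have e : L1 + (2 * (m - t) - L1) = 2 * (m - t) := by omega
  rw [e] at b2
  have s4 : Fin4 t S p f0 (3 * t + 1) f2 (2 * (m - t)) ∅ := by
    refine ⟨b2, by omega, ?_, ?_⟩
    · intro i hi _
      rw [b1 i (by omega), a3 i (by omega)]
    · intro x hx hn j
      rw [← hA]
      apply badS_spec t f0 A s1.good
      intro hxb
      obtain ⟨i, hi, e⟩ := a5 x (Finset.mem_filter.2 ⟨hxb, hx⟩)
      exact hn i (by omega) (by rw [b1 i hi, e])
  obtain ⟨f, U, _, h⟩ := s4.finish hm (2 * t) (by omega) (by omega)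
  refine ⟨f, ?_⟩
  have e : 2 * (m - t) + 2 * t = 2 * m := by omega
  rw [← e]
  exact h.st

theorem take_prod {G : Type*} [Group G] (f : ℕ → G) (L i : ℕ) (hi : i ≤ L) :
    (((List.range L).map f).take i).prod = WP f 0 i := by
  rw [← List.map_take, List.take_range, Nat.min_eq_left hi]
  clear hi
  induction i with
  | zero => rfl
  | succ k ih => rw [List.range_succ, List.map_append, List.prod_append, ih]; simp [WP]

end aux

/-- For every positive integer `t` there is a constant `K(t)` such that
for every finite group `N`, every `φ : Z_2 → Aut(N)`, and every balanced subset `S` of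
`(N ⋊_φ Z_2) \ {(0,0)}` of size `k ≥ K(t)`, `S` admits an alternating parity `t`-weak
sequencing. -/
theorem stmt1 (t : ℕ) (ht : 0 < t) :
    ∃ K : ℕ, ∀ (N : Type*) [Group N] [Finite N] (φ : Z2 →* MulAut N)
      (S : Finset (N ⋊[φ] Z2)), (1 : N ⋊[φ] Z2) ∉ S →
      Even S.card → HasType S (S.card / 2) (S.card / 2) → K ≤ S.card →
      ∃ l : List (N ⋊[φ] Z2), IsOrderingOf l S ∧ AltList l ∧ WeakSeqList t l := by
  obtain ⟨A, hA⟩ : ∃ A, A = 2 * (t + 1) * (3 * t + 1) := ⟨_, rfl⟩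
  obtain ⟨B, hB⟩ : ∃ B, B = A * (A * (t + 1)) := ⟨_, rfl⟩
  refine ⟨2 * (A + 3 * B + 4 * t + 10), ?_⟩
  intro N _ _ φ S h1S hev hty hK
  classical
  obtain ⟨m, hm⟩ : ∃ m, S.card = 2 * m := by
    obtain ⟨r, hr⟩ := hev
    exact ⟨r, by omega⟩
  let p : N ⋊[φ] Z2 → ℕ := fun g => if g.right = 1 then 0 else 1
  have hp2 : ∀ g, p g < 2 := by
    intro g
    simp only [p]
    split_ifs <;> omega
  have hp0 : ∀ g, p g = 0 ↔ g.right = 1 := by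
    intro g
    simp only [p]
    split_ifs <;> simp_all
  have hp1 : ∀ g, p g = 1 ↔ ¬ g.right = 1 := by
    intro g
    simp only [p]
    split_ifs <;> simp_all
  have hhalf : HalfS S p m := by
    have h0 : (S.filter (fun g => g.right = 1)).card = m := by
      have := hty.1
      unfold evenCount at this
      rw [hm] at this
      have e : 2 * m / 2 = m := by omega
      rw [e] at this
      convert this
    intro c hc
    have : c = 0 ∨ c = 1 := by omega
    rcases this with rfl | rfl
    · simp only [hp0]
      convert h0
    · simp only [hp1]
      have := Finset.card_filter_add_card_filter_not (s := S) (fun g => g.right = 1)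
      have e : (S.filter (fun g => ¬ g.right = 1)).card = m := by omega
      convert e
  obtain ⟨f, hf⟩ := main_exists t S p m hhalf hp2 h1S A B hA hB (by omega)
  refine ⟨(List.range (2 * m)).map f, ⟨?_, ?_⟩, ?_, ?_⟩
  · refine List.Nodup.map_on ?_ List.nodup_range
    intro i hi j hj e
    exact hf.inj i j (List.mem_range.1 hi) (List.mem_range.1 hj) e
  · have himg : (Finset.range (2 * m)).image f = S := by
      apply Finset.eq_of_subset_of_card_le
      · intro x hx
        obtain ⟨i, hi, rfl⟩ := Finset.mem_image.1 hx
        exact hf.mem i (Finset.mem_range.1 hi)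
      · rw [Finset.card_image_of_injOn, Finset.card_range, hm]
        intro i hi j hj e
        exact hf.inj i j (by simpa using hi) (by simpa using hj) e
    intro x
    rw [← himg]
    simp
  · unfold AltList
    refine List.isChain_iff_getElem.2 ?_
    intro i hi
    simp only [List.length_map, List.length_range] at hi
    simp only [List.getElem_map, List.getElem_range]
    intro e
    have e1 := hf.col i (by omega)
    have e2 := hf.col (i + 1) (by omega)
    have e3 : p (f i) = p (f (i + 1)) := by simp only [p, e]
    omega
  · intro i j hij hj hjt
    simp only [List.length_map, List.length_range] at hj
    rw [take_prod f _ i (by omega), take_prod f _ j hj]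
    obtain ⟨n, rfl⟩ : ∃ n, j = i + n := ⟨j - i, by omega⟩
    rw [WP_add, Nat.zero_add]
    intro e
    exact hf.good i n (by omega) (by omega) hj (by simpa using e)
end

section
/- For every positive integer t there exists a constant K(t) such that for every finite group G and every subset S of G \ {0} of size k ≥ K(t), the set S is t-weakly sequenceable. -/
namespace WSAux

variable {G : Type*} [Group G]

def Valid (t : ℕ) (l : List G) : Prop :=
  ∀ w, w <:+: l → w ≠ [] → w.length ≤ t → w.prod ≠ 1

theorem infix_app {α : Type*} {w A B : List α} (h : w <:+: A ++ B) :
    w <:+: A ∨ w <:+: B ∨ ∃ w1 w2, w = w1 ++ w2 ∧ w1 <:+ A ∧ w2 <+: B := by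
  obtain ⟨u, v, h⟩ := h
  rw [List.append_eq_append_iff] at h
  rcases h with ⟨a, h1, h2⟩ | ⟨c, h1, h2⟩
  · exact Or.inl ⟨u, a, h1.symm⟩
  · rw [List.append_eq_append_iff] at h1
    rcases h1 with ⟨a, h3, h4⟩ | ⟨b, h3, h4⟩
    · refine Or.inr (Or.inr ⟨a, c, h4, ⟨u, h3.symm⟩, ⟨v, h2.symm⟩⟩)
    · right; left
      refine ⟨b, v, ?_⟩
      rw [h2, h4]

theorem infix_mid {α : Type*} {w A B : List α} {x : α} (h : w <:+: A ++ x :: B) :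
    w <:+: A ∨ w <:+: B ∨ ∃ w1 w2, w = w1 ++ x :: w2 ∧ w1 <:+ A ∧ w2 <+: B := by
  rcases infix_app h with h | h | ⟨w1, w2, rfl, h1, h2⟩
  · exact Or.inl h
  · rw [List.infix_cons_iff] at h
    rcases h with h | h
    · rw [List.prefix_cons_iff] at h
      rcases h with rfl | ⟨t, rfl, ht⟩
      · exact Or.inl (List.nil_infix)
      · exact Or.inr (Or.inr ⟨[], t, rfl, List.nil_suffix, ht⟩)
    · exact Or.inr (Or.inl h)
  · rw [List.prefix_cons_iff] at h2
    rcases h2 with rfl | ⟨t, rfl, ht⟩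
    · left; simpa using h1.isInfix
    · exact Or.inr (Or.inr ⟨w1, t, rfl, h1, ht⟩)

theorem Valid.mono {t : ℕ} {l l' : List G} (h : Valid t l) (h' : l' <:+: l) : Valid t l' :=
  fun w hw => h w (hw.trans h')

open Classical in
theorem exists_bad (t : ℕ) (A B : List G) (hA : Valid t A) (hB : Valid t B) :
    ∃ F : Finset G, F.card ≤ (t + 1) * (t + 1) ∧ ∀ x, x ∉ F → Valid t (A ++ x :: B) := by
  refine ⟨((Finset.range (t+1)) ×ˢ (Finset.range (t+1))).image
    (fun p => ((A.drop (A.length - p.1)).prod)⁻¹ * ((B.take p.2).prod)⁻¹),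
    Finset.card_image_le.trans (by simp), ?_⟩
  intro x hx w hw hne hlen hprod
  rcases infix_mid hw with h | h | ⟨w1, w2, rfl, h1, h2⟩
  · exact hA w h hne hlen hprod
  · exact hB w h hne hlen hprod
  · apply hx
    simp only [List.length_append, List.length_cons] at hlen
    refine Finset.mem_image.2 ⟨(w1.length, w2.length), ?_, ?_⟩
    · simp; omega
    · rw [List.suffix_iff_eq_drop] at h1
      rw [List.prefix_iff_eq_take] at h2
      simp only
      rw [← h1, ← h2]
      simp only [List.prod_append, List.prod_cons] at hprod
      rw [inv_mul_eq_iff_eq_mul]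
      rw [← mul_assoc] at hprod
      exact (eq_inv_of_mul_eq_one_left hprod).symm

def Good (t : ℕ) (P P' : List G) : Prop :=
  ∀ U Q, Valid t (U ++ P ++ Q) → Valid t (U ++ P' ++ Q)

theorem good_chunk {t : ℕ} {A B : List G} {x : G} (hA : t ≤ A.length) (hB : t ≤ B.length)
    (h : Valid t (A ++ x :: B)) : Good t (A ++ B) (A ++ x :: B) := by
  intro U Q hv w hw hne hlen
  have e : U ++ (A ++ x :: B) ++ Q = (U ++ A) ++ x :: (B ++ Q) := by simp
  rw [e] at hw
  rcases infix_mid hw with h' | h' | ⟨w1, w2, rfl, h1, h2⟩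
  · exact hv w (h'.trans ⟨[], B ++ Q, by simp⟩) hne hlen
  · exact hv w (h'.trans ⟨U ++ A, [], by simp⟩) hne hlen
  · refine h _ ?_ hne hlen
    simp only [List.length_append, List.length_cons] at hlen
    have h1' : w1 <:+ A := List.suffix_of_suffix_length_le h1 (List.suffix_append U A) (by omega)
    have h2' : w2 <+: B := List.prefix_of_prefix_length_le h2 (List.prefix_append B Q) (by omega)
    obtain ⟨a, rfl⟩ := h1'
    obtain ⟨b, rfl⟩ := h2'
    exact ⟨a, b, by simp⟩

def Flex (t r : ℕ) (P : List G) (H : Finset G) : Prop :=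
  ∀ X : List G, X.length ≤ r → (∀ x ∈ X, x ∉ H) → ∃ P', P'.Perm (P ++ X) ∧ Good t P P'

open Classical in
theorem exists_flex (t r : ℕ) : ∀ P : List G, Valid t P → r * (2 * t) ≤ P.length →
    ∃ H : Finset G, H.card ≤ r * ((t + 1) * (t + 1)) ∧ Flex t r P H := by
  induction r with
  | zero =>
    intro P _ _
    refine ⟨∅, by simp, ?_⟩
    intro X hX _
    have : X = [] := by simpa using hX
    subst this
    exact ⟨P, by simp, fun U Q h => h⟩
  | succ r ih =>
    intro P hP hlen
    obtain ⟨A, B, R, rfl, hA, hB⟩ : ∃ A B R, P = A ++ B ++ R ∧ A.length = t ∧ B.length = t := by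
      have : 2 * t ≤ P.length := by nlinarith
      refine ⟨P.take t, (P.drop t).take t, (P.drop t).drop t, by simp, by simp; omega, by simp; omega⟩
    obtain ⟨H, hH, hF⟩ := ih R (hP.mono ⟨A ++ B, [], by simp⟩) (by
      simp only [List.length_append] at hlen; nlinarith)
    obtain ⟨F, hFc, hFv⟩ := exists_bad t A B (hP.mono ⟨[], B ++ R, by simp⟩)
      (hP.mono ⟨A, R, by simp⟩)
    refine ⟨H ∪ F, (Finset.card_union_le _ _).trans (by nlinarith), ?_⟩
    intro X hX hXH
    cases X with
    | nil => exact ⟨A ++ B ++ R, by simp, fun U Q h => h⟩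
    | cons x X =>
      obtain ⟨R', hp, hg⟩ := hF X (by simpa using hX)
        (fun y hy hyH => hXH y (by simp [hy]) (by simp [hyH]))
      refine ⟨(A ++ x :: B) ++ R', ?_, ?_⟩
      · classical
        rw [List.perm_iff_count] at hp ⊢
        intro a
        have := hp a
        simp only [List.count_append, List.count_cons] at this ⊢
        omega
      · intro U Q h
        have h1 := good_chunk hA.ge hB.ge
          (hFv x (fun hx => hXH x (by simp) (by simp [hx]))) U (R ++ Q) (by simpa using h)
        have h2 := hg (U ++ (A ++ x :: B)) Q (by simpa using h1)
        simpa using h2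

theorem valid_nil (t : ℕ) : Valid t ([] : List G) := by
  intro w hw hne
  exact absurd (List.infix_nil.1 hw) hne

theorem valid_single (t : ℕ) {h : G} (hh : h ≠ 1) : Valid t [h] := by
  intro w hw hne
  rw [List.infix_cons_iff, List.prefix_cons_iff] at hw
  rcases hw with (h | ⟨t, rfl, ht⟩) | h
  · exact absurd h hne
  · have := List.prefix_nil.1 ht
    subst this; simpa using fun _ => hh
  · exact absurd (List.infix_nil.1 h) hne

open Classical in
theorem exists_avoid (S F : Finset G) (Q : List G) (h : Q.length + F.card < S.card) :
    ∃ x ∈ S, x ∉ Q ∧ x ∉ F := by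
  by_contra hc
  push Not at hc
  have : S ⊆ Q.toFinset ∪ F := by
    intro x hx
    by_cases hq : x ∈ Q
    · simp [hq]
    · simp [hc x hx hq]
  have h1 := Finset.card_le_card this
  have h2 := Finset.card_union_le Q.toFinset F
  have h3 := Q.toFinset_card_le
  omega

/-- valid, duplicate-free, inside `S` -/
def Ok (t : ℕ) (S : Finset G) (Q : List G) : Prop :=
  Valid t Q ∧ Q.Nodup ∧ ∀ x ∈ Q, x ∈ S

theorem extend_one (t : ℕ) (S : Finset G) (Q : List G) (hQ : Ok t S Q)
    (h : Q.length + (t + 1) * (t + 1) < S.card) : ∃ x, Ok t S (Q ++ [x]) := by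
  obtain ⟨F, hF, hv⟩ := exists_bad t Q [] hQ.1 (valid_nil t)
  obtain ⟨x, hxS, hxQ, hxF⟩ := exists_avoid S F Q (by omega)
  refine ⟨x, hv x hxF, ?_, ?_⟩
  · have := hQ.2.1
    simp only [List.nodup_append]
    refine ⟨this, by simp, ?_⟩
    intro a ha b hb hab
    simp only [List.mem_singleton] at hb
    subst hb; subst hab; exact hxQ ha
  · intro y hy
    simp only [List.mem_append, List.mem_singleton] at hy
    rcases hy with hy | rfl
    · exact hQ.2.2 y hy
    · exact hxS

theorem extend_two (t : ℕ) (S : Finset G) (Q : List G) (hQ : Ok t S Q) (g : G) (hg : g ≠ 1)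
    (hgS : g ∈ S) (hgQ : g ∉ Q)
    (h : Q.length + 1 + (t + 1) * (t + 1) < S.card) : ∃ x, Ok t S (Q ++ [x, g]) := by
  obtain ⟨F, hF, hv⟩ := exists_bad t Q [g] hQ.1 (valid_single t hg)
  obtain ⟨x, hxS, hxQ, hxF⟩ := exists_avoid S F (g :: Q) (by simp; omega)
  simp only [List.mem_cons, not_or] at hxQ
  refine ⟨x, hv x hxF, ?_, ?_⟩
  · have := hQ.2.1
    simp only [List.nodup_append]
    refine ⟨this, by simp [hxQ.1], ?_⟩
    intro a ha b hb hab
    simp only [List.mem_cons, List.not_mem_nil, or_false] at hb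
    subst hab
    rcases hb with rfl | rfl
    · exact hxQ.2 ha
    · exact hgQ ha
  · intro y hy
    simp only [List.mem_append, List.mem_cons, List.not_mem_nil, or_false] at hy
    rcases hy with hy | rfl | rfl
    · exact hQ.2.2 y hy
    · exact hxS
    · exact hgS

theorem exists_start (t : ℕ) (S : Finset G) (n : ℕ) (h : n + (t + 1) * (t + 1) ≤ S.card) :
    ∃ P, Ok t S P ∧ P.length = n := by
  induction n with
  | zero => exact ⟨[], ⟨valid_nil t, by simp, by simp⟩, rfl⟩
  | succ n ih =>
    obtain ⟨P, hP, hl⟩ := ih (by omega)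
    obtain ⟨x, hx⟩ := extend_one t S P hP (by omega)
    exact ⟨_, hx, by simp [hl]⟩

open Classical in
theorem exists_heavy (t : ℕ) (S : Finset G) (h1 : (1 : G) ∉ S) (P : List G) (hP : Ok t S P)
    (H : Finset G) : P.length + 2 * H.card + (t + 1) * (t + 1) ≤ S.card →
    ∃ R, Ok t S (P ++ R) ∧ R.length ≤ 2 * H.card ∧ ∀ x ∈ H, x ∈ S → x ∈ P ++ R := by
  induction H using Finset.induction_on with
  | empty => intro _; exact ⟨[], by simpa using hP, by simp, by simp⟩
  | insert g H hg ih =>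
    intro hc
    rw [Finset.card_insert_of_notMem hg] at hc ⊢
    obtain ⟨R, hR, hl, hm⟩ := ih (by omega)
    by_cases hgo : g ∈ S ∧ g ∉ P ++ R
    · obtain ⟨x, hx⟩ := extend_two t S (P ++ R) hR g (fun e => h1 (e ▸ hgo.1)) hgo.1 hgo.2
        (by simp only [List.length_append]; omega)
      refine ⟨R ++ [x, g], by simpa using hx, by simp; omega, ?_⟩
      intro y hy hyS
      rcases Finset.mem_insert.1 hy with rfl | hy
      · simp
      · have := hm y hy hyS
        simp only [List.mem_append] at this ⊢
        tauto
    · refine ⟨R, hR, by omega, ?_⟩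
      intro y hy hyS
      rcases Finset.mem_insert.1 hy with rfl | hy
      · by_contra hc
        exact hgo ⟨hyS, hc⟩
      · exact hm y hy hyS

theorem exists_finish (t : ℕ) (S : Finset G) (n : ℕ) : ∀ Q, Ok t S Q → S.card - Q.length ≤ n →
    ∃ R, Ok t S (Q ++ R) ∧ S.card ≤ (Q ++ R).length + (t + 1) * (t + 1) := by
  induction n with
  | zero => intro Q hQ h; exact ⟨[], by simpa using hQ, by simp; omega⟩
  | succ n ih =>
    intro Q hQ h
    by_cases hc : Q.length + (t + 1) * (t + 1) < S.card
    · obtain ⟨x, hx⟩ := extend_one t S Q hQ hc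
      obtain ⟨R, hR, hl⟩ := ih _ hx (by simp; omega)
      exact ⟨x :: R, by simpa using hR, by simpa using hl⟩
    · exact ⟨[], by simpa using hQ, by simp; omega⟩

theorem weak_of_valid {t : ℕ} {l : List G} (h : Valid t l) : WeakSeqList t l := by
  intro i j hij hj hd he
  have e : l.take j = l.take i ++ (l.take j).drop i := by
    conv_lhs => rw [← List.take_append_drop i (l.take j)]
    rw [List.take_take, min_eq_left hij.le]
  have hl : ((l.take j).drop i).length = j - i := by simp; omega
  refine h ((l.take j).drop i) ((List.drop_suffix _ _).isInfix.trans (List.take_prefix _ _).isInfix)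
    ?_ (by omega) ?_
  · intro h0
    rw [h0] at hl
    simp at hl; omega
  · rw [e, List.prod_append] at he
    exact left_eq_mul.1 he

open Classical in
theorem main (t : ℕ) (S : Finset G) (h1 : (1 : G) ∉ S)
    (hS : ((t+1)*(t+1)) * (2 * t) + 2 * (((t+1)*(t+1)) * ((t+1)*(t+1))) + (t+1)*(t+1) ≤ S.card) :
    ∃ l : List G, IsOrderingOf l S ∧ WeakSeqList t l := by
  obtain ⟨P, hP, hPl⟩ := exists_start t S (((t+1)*(t+1)) * (2 * t)) (by omega)
  obtain ⟨H, hH, hF⟩ := exists_flex t ((t+1)*(t+1)) P hP.1 hPl.ge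
  obtain ⟨R, hR, -, hm⟩ := exists_heavy t S h1 P hP H (by omega)
  obtain ⟨R2, hR2, hl⟩ := exists_finish t S _ _ hR le_rfl
  set Q := P ++ R ++ R2 with hQ
  have hsub : Q.toFinset ⊆ S := fun x hx => hR2.2.2 x (by simpa using hx)
  have hcard : (S \ Q.toFinset).card ≤ (t+1)*(t+1) := by
    rw [Finset.card_sdiff_of_subset hsub, List.toFinset_card_of_nodup hR2.2.1]
    omega
  obtain ⟨P', hp, hg⟩ := hF (S \ Q.toFinset).toList (by simpa using hcard) (by
    intro x hx hxH
    simp only [Finset.mem_toList, Finset.mem_sdiff, List.mem_toFinset] at hx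
    exact hx.2 (List.mem_append_left _ (hm x hxH hx.1)))
  have hv : Valid t (P' ++ (R ++ R2)) := by
    simpa using hg [] (R ++ R2) (by simpa [hQ] using hR2.1)
  have hperm : (P' ++ (R ++ R2)).Perm (Q ++ (S \ Q.toFinset).toList) := by
    rw [List.perm_iff_count] at hp ⊢
    intro a
    have := hp a
    simp only [hQ, List.count_append] at this ⊢
    omega
  refine ⟨P' ++ (R ++ R2), ⟨?_, ?_⟩, weak_of_valid hv⟩
  · rw [hperm.nodup_iff, List.nodup_append]
    refine ⟨hR2.2.1, Finset.nodup_toList _, ?_⟩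
    intro a ha b hb hab
    subst hab
    simp only [Finset.mem_toList, Finset.mem_sdiff, List.mem_toFinset] at hb
    exact hb.2 ha
  · intro x
    rw [hperm.mem_iff, List.mem_append, Finset.mem_toList, Finset.mem_sdiff, List.mem_toFinset]
    constructor
    · rintro (h | h)
      · exact hR2.2.2 x h
      · exact h.1
    · intro h
      by_cases hq : x ∈ Q
      · exact Or.inl hq
      · exact Or.inr ⟨h, hq⟩

end WSAux

/-- For every positive integer `t` there exists a constant `K(t)` such
that for every finite group `G` and every subset `S` of `G \ {0}` of size `k ≥ K(t)`,
`S` is `t`-weakly sequenceable. -/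
theorem stmt2 (t : ℕ) (ht : 0 < t) :
    ∃ K : ℕ, ∀ (G : Type*) [Group G] [Finite G] (S : Finset G),
      (1 : G) ∉ S → K ≤ S.card →
      ∃ l : List G, IsOrderingOf l S ∧ WeakSeqList t l := by
  exact ⟨_, fun G _ _ S h1 hS => WSAux.main t S h1 hS⟩
end

section
/- For all positive integers t and ℓ there exists a constant k_{t,ℓ} such that the following holds: for every (not necessarily abelian) group (G,+) and every finite subset S of G of size k > k_{t,ℓ}, there exists a subset T ⊆ S with |T| ≥ ℓ such that no nonempty subset of T of size h ≤ t admits an ordering of its elements whose sum is the identity 0 of G. -/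
open scoped Pointwise in
theorem list_prod_mem_aux {G : Type*} [Group G] [DecidableEq G] (T : Finset G) (t : ℕ) :
    ∀ l : List G, (∀ x ∈ l, x ∈ T) → l.length ≤ t → l.prod ∈ (insert 1 T) ^ t := by
  induction t with
  | zero =>
    intro l _ h
    have : l = [] := List.length_eq_zero_iff.mp (by omega)
    subst this; simp
  | succ n ih =>
    intro l hl h
    rw [pow_succ']
    cases l with
    | nil =>
      have := ih [] (by simp) (by simp)
      exact Finset.mem_mul.mpr ⟨1, by simp, _, this, by simp⟩
    | cons a l =>
      have := ih l (fun x hx => hl x (by simp [hx])) (by simpa using h)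
      exact Finset.mem_mul.mpr ⟨a, by simp [hl a (by simp)], _, this, by simp⟩

open scoped Pointwise in
theorem greedy_aux {G : Type*} [Group G] (t ℓ : ℕ) (S : Finset G)
    (hS : ℓ + (ℓ + 1) ^ t < S.card) : ∀ m ≤ ℓ, ∃ T ⊆ S, T.card = m ∧
      ∀ l : List G, l.Nodup → l ≠ [] → (∀ x ∈ l, x ∈ T) → l.length ≤ t → l.prod ≠ 1 := by
  classical
  intro m
  induction m with
  | zero =>
    intro _
    refine ⟨∅, by simp, by simp, ?_⟩
    intro l _ h0 h
    cases l with
    | nil => simp at h0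
    | cons a l => simpa using h a (by simp)
  | succ m ih =>
    intro hm
    obtain ⟨T, hTS, hTc, hT⟩ := ih (by omega)
    have hc : (T ∪ ((insert 1 T) ^ t)⁻¹).card < S.card := by
      have h1 := Finset.card_union_le T ((insert 1 T) ^ t)⁻¹
      have h2 : (((insert 1 T) ^ t)⁻¹).card ≤ (ℓ + 1) ^ t := by
        rw [Finset.card_inv]
        refine Finset.card_pow_le.trans (Nat.pow_le_pow_left ?_ t)
        have := Finset.card_insert_le 1 T
        omega
      omega
    obtain ⟨x, hxS, hx⟩ := Finset.exists_mem_notMem_of_card_lt_card hc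
    rw [Finset.mem_union, not_or] at hx
    refine ⟨insert x T, Finset.insert_subset hxS hTS, by
      rw [Finset.card_insert_of_notMem hx.1, hTc], ?_⟩
    intro l hnd hne hl hlen hp
    by_cases hxl : x ∈ l
    · obtain ⟨a, b, rfl⟩ := List.append_of_mem hxl
      have hnx : x ∉ b ++ a := by
        have := (List.nodup_middle.mp hnd)
        rw [List.nodup_cons] at this
        simpa [or_comm] using this.1
      apply hx.2
      rw [Finset.mem_inv']
      have := list_prod_mem_aux T t (b ++ a) (by
        intro y hy
        have h1 := hl y (by simp at hy ⊢; tauto)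
        rcases Finset.mem_insert.mp h1 with h | h
        · subst h; exact absurd hy hnx
        · exact h) (by simp at hlen ⊢; omega)
      convert this using 1
      rw [List.prod_append, List.prod_cons] at hp
      rw [List.prod_append, inv_eq_iff_mul_eq_one, ← mul_assoc]
      have h3 : x * b.prod = (a.prod)⁻¹ := (inv_eq_of_mul_eq_one_right hp).symm
      rw [h3, inv_mul_cancel]
    · refine hT l hnd hne ?_ hlen hp
      intro y hy
      rcases Finset.mem_insert.mp (hl y hy) with h | h
      · subst h; exact absurd hy hxl
      · exact h

/-- For all positive integers `t` and `ℓ` there is a constant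
`k_{t,ℓ}` such that every finite subset `S` of a (not necessarily abelian) group `G`
with `|S| > k_{t,ℓ}` contains a subset `T` with `|T| ≥ ℓ` none of whose nonempty
subsets of size `h ≤ t` admits an ordering summing to the identity. -/
theorem stmt3 (t ℓ : ℕ) (ht : 0 < t) (hℓ : 0 < ℓ) :
    ∃ k : ℕ, ∀ (G : Type*) [Group G] (S : Finset G), k < S.card →
      ∃ T ⊆ S, ℓ ≤ T.card ∧
        ∀ Z ⊆ T, Z.Nonempty → Z.card ≤ t →
          ¬ ∃ l : List G, l.Nodup ∧ (∀ x, x ∈ l ↔ x ∈ Z) ∧ l.prod = 1 := by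
  refine ⟨ℓ + (ℓ + 1) ^ t, fun G _ S hS => ?_⟩
  classical
  obtain ⟨T, hTS, hc, hT⟩ := greedy_aux t ℓ S hS ℓ le_rfl
  refine ⟨T, hTS, hc.ge, ?_⟩
  rintro Z hZ ⟨z, hz⟩ hZc ⟨l, hnd, hl, hp⟩
  refine hT l hnd ?_ (fun x hx => hZ ((hl x).mp hx)) ?_ hp
  · rintro rfl
    simpa using (hl z).mpr hz
  · have : l.toFinset = Z := by ext x; simp [hl]
    rw [← List.toFinset_card_of_nodup hnd, this]
    exact hZc
end

section
/- Let (G,+) be a finite group with identity 0, let S ⊆ G \ {0} have size k, and let h and t be positive integers with h ≤ k − (t−1). Then there exist h distinct elements y_1, …, y_h of S such that, setting s_0 = 0 and s_i = y_1 + ⋯ + y_i, one has s_i ≠ s_j for all indices with 0 ≤ i < j ≤ min(h, i + t). -/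
theorem stmt4_aux {G : Type*} [Group G] (S : Finset G) (hS1 : (1 : G) ∉ S)
    (t : ℕ) (ht : 0 < t) (h : ℕ) (hhk : h + (t - 1) ≤ S.card) :
    ∃ l : List G, l.length = h ∧ l.Nodup ∧ (∀ x ∈ l, x ∈ S) ∧
      ∀ i j : ℕ, i < j → j ≤ min h (i + t) →
        (l.take i).prod ≠ (l.take j).prod := by
  classical
  induction h with
  | zero =>
    refine ⟨[], rfl, List.nodup_nil, by simp, ?_⟩
    intro i j hij hj
    simp at hj
    omega
  | succ n ih =>
    obtain ⟨l, hl, hnd, hS, hp⟩ := ih (by omega)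
    let F := l.toFinset ∪
      (Finset.Ico (n + 1 - t) n).image (fun i => l.prod⁻¹ * (l.take i).prod)
    have hF : F.card < S.card := by
      have h1 := Finset.card_union_le l.toFinset
        ((Finset.Ico (n + 1 - t) n).image (fun i => l.prod⁻¹ * (l.take i).prod))
      have h2 := l.toFinset_card_le
      have h3 : ((Finset.Ico (n + 1 - t) n).image
        (fun i => l.prod⁻¹ * (l.take i).prod)).card ≤ _ := Finset.card_image_le
      rw [Nat.card_Ico] at h3
      change (l.toFinset ∪ _).card < _
      omega
    obtain ⟨y, hyS, hyF⟩ := Finset.exists_mem_notMem_of_card_lt_card hF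
    simp only [F, Finset.mem_union, List.mem_toFinset, Finset.mem_image, Finset.mem_Ico,
      not_or, not_exists, not_and] at hyF
    obtain ⟨hyl, hyF⟩ := hyF
    refine ⟨l ++ [y], by simp [hl], ?_, ?_, ?_⟩
    · rw [List.nodup_append]
      refine ⟨hnd, by simp, ?_⟩
      intro a ha b hb
      simp at hb
      subst hb
      rintro rfl
      exact hyl ha
    · intro x hx
      simp at hx
      rcases hx with hx | rfl
      · exact hS x hx
      · exact hyS
    · intro i j hij hj
      rw [le_min_iff] at hj
      rw [List.take_append_of_le_length (by omega : i ≤ l.length)]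
      by_cases hjn : j ≤ n
      · rw [List.take_append_of_le_length (by omega : j ≤ l.length)]
        exact hp i j hij (by rw [le_min_iff]; omega)
      · have hj' : j = n + 1 := by omega
        rw [List.take_of_length_le (l := l ++ [y]) (by simp; omega), List.prod_append,
          List.prod_singleton]
        intro heq
        by_cases hin : i = n
        · rw [List.take_of_length_le (by omega)] at heq
          have : y = 1 := by simpa using heq.symm
          exact hS1 (this ▸ hyS)
        · exact hyF i (by omega) (by rw [heq]; group)

/-- Let `G` be a finite group, `S ⊆ G \ {0}` of size `k`, and `h, t`
positive integers with `h ≤ k - (t-1)`.  Then there are `h` distinct elements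
`y_1, …, y_h` of `S` whose partial sums `s_i` satisfy `s_i ≠ s_j` whenever
`0 ≤ i < j ≤ min(h, i+t)`. -/
theorem stmt4 {G : Type*} [Group G] [Finite G] (S : Finset G) (hS1 : (1 : G) ∉ S)
    (k h t : ℕ) (hk : S.card = k) (ht : 0 < t) (hh : 0 < h)
    (hhk : h + (t - 1) ≤ k) :
    ∃ l : List G, l.length = h ∧ l.Nodup ∧ (∀ x ∈ l, x ∈ S) ∧
      ∀ i j : ℕ, i < j → j ≤ min h (i + t) →
        (l.take i).prod ≠ (l.take j).prod := by
  exact stmt4_aux S hS1 t ht h (by omega)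
end

section
/- For every positive integer t and every even positive integer ℓ there exists a constant k̄_{t,ℓ} such that the following holds: for every finite group N, every group homomorphism φ : Z_2 → Aut(N), and every subset S of G = N ⋊_φ Z_2 of even size k > k̄_{t,ℓ} and type (k/2, k/2), the set S contains a subset T of type (ℓ/2, ℓ/2) such that no nonempty subset of T of size h ≤ t admits an alternating parity ordering of its elements whose sum is the identity (0,0). -/
open scoped Pointwise in
theorem aux_prod_mem {G : Type*} [Group G] [DecidableEq G] (T : Finset G) (L : ℕ) (l : List G)
    (hl : l.length ≤ L) (h : ∀ x ∈ l, x ∈ T) : l.prod ∈ (insert 1 T) ^ L := by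
  induction l generalizing L with
  | nil =>
    have := Finset.pow_mem_pow (Finset.mem_insert_self (1 : G) T) (n := L)
    simpa using this
  | cons a l ih =>
    obtain _ | L := L
    · simp at hl
    · rw [List.prod_cons, pow_succ']
      refine Finset.mul_mem_mul (Finset.mem_insert_of_mem (h a (by simp))) (ih L ?_ ?_)
      · simpa using hl
      · intro x hx
        exact h x (by simp [hx])

def AuxFree {G : Type*} [Group G] (T : Finset G) : Prop :=
  ∀ l : List G, l.Nodup → (∀ x ∈ l, x ∈ T) → l.prod = 1 → l = []

def auxB (L : ℕ) : ℕ := L + ((L + 1) ^ L) * ((L + 1) ^ L)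

open scoped Pointwise in
theorem aux_step {G : Type*} [Group G] [DecidableEq G] (L : ℕ) (T A : Finset G)
    (hT : AuxFree T) (hL : T.card ≤ L) (hA : auxB L < A.card) :
    ∃ x ∈ A, x ∉ T ∧ AuxFree (insert x T) := by
  set Q : Finset G := (insert 1 T) ^ L with hQ
  have hQc : Q.card ≤ (L + 1) ^ L :=
    Finset.card_pow_le.trans
      (Nat.pow_le_pow_left ((Finset.card_insert_le _ _).trans (by omega)) L)
  have hF : (T ∪ Q⁻¹ * Q⁻¹).card < A.card := by
    refine lt_of_le_of_lt ?_ hA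
    refine (Finset.card_union_le _ _).trans (Nat.add_le_add hL ?_)
    refine Finset.card_mul_le.trans ?_
    rw [Finset.card_inv]
    exact Nat.mul_le_mul hQc hQc
  obtain ⟨x, hxA, hx⟩ := Finset.exists_mem_notMem_of_card_lt_card hF
  rw [Finset.mem_union, not_or] at hx
  refine ⟨x, hxA, hx.1, ?_⟩
  intro l hnd hl hp
  by_cases hxl : x ∈ l
  · exfalso
    obtain ⟨u, v, rfl⟩ := List.append_of_mem hxl
    have key : ∀ w : List G, w.Nodup → (∀ y ∈ w, y ∈ T) → w.prod ∈ Q := by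
      intro w hw hwT
      refine aux_prod_mem T L w ?_ hwT
      rw [← List.toFinset_card_of_nodup hw]
      refine (Finset.card_le_card ?_).trans hL
      intro y hy
      exact hwT y (by simpa using hy)
    have hnd' := List.nodup_middle.1 hnd
    rw [List.nodup_cons, List.nodup_append] at hnd'
    obtain ⟨hxn, hu, hv, -⟩ := hnd'
    have hmem : ∀ y ∈ u ++ v, y ∈ T := by
      intro y hy
      have h1 := hl y (by simp at hy ⊢; tauto)
      rw [Finset.mem_insert] at h1
      rcases h1 with rfl | h1
      · exact absurd hy hxn
      · exact h1
    apply hx.2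
    have hu' := key u hu (fun y hy => hmem y (by simp [hy]))
    have hv' := key v hv (fun y hy => hmem y (by simp [hy]))
    have : x = u.prod⁻¹ * v.prod⁻¹ := by
      rw [List.prod_append, List.prod_cons, ← mul_assoc] at hp
      have h5 : x * v.prod = u.prod⁻¹ := by
        rw [mul_assoc] at hp
        exact (inv_eq_of_mul_eq_one_right hp).symm
      rw [eq_mul_inv_iff_mul_eq, h5]
    rw [this]
    exact Finset.mul_mem_mul (Finset.inv_mem_inv hu') (Finset.inv_mem_inv hv')
  · refine hT l hnd ?_ hp
    intro y hy
    have h1 := hl y hy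
    rw [Finset.mem_insert] at h1
    rcases h1 with rfl | h1
    · exact absurd hy hxl
    · exact h1

theorem aux_iter {G : Type*} [Group G] [DecidableEq G] (L : ℕ) (A : Finset G)
    (hA : auxB L < A.card) (m : ℕ) (T : Finset G) (hT : AuxFree T) (hL : T.card + m ≤ L) :
    ∃ T' ⊆ A, T'.card = m ∧ Disjoint T T' ∧ AuxFree (T ∪ T') := by
  induction m with
  | zero => exact ⟨∅, by simp, by simp, by simp, by simpa using hT⟩
  | succ m ih =>
    obtain ⟨T', hs, hc, hd, hf⟩ := ih (by omega)
    obtain ⟨x, hxA, hx, hxf⟩ := aux_step L (T ∪ T') A hf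
      (by rw [Finset.card_union_of_disjoint hd]; omega) hA
    rw [Finset.mem_union, not_or] at hx
    refine ⟨insert x T', Finset.insert_subset hxA hs, ?_, ?_, ?_⟩
    · rw [Finset.card_insert_of_notMem hx.2, hc]
    · rw [Finset.disjoint_insert_right]; exact ⟨hx.1, hd⟩
    · rw [Finset.union_insert]; exact hxf

/-- For every positive `t` and every even positive `ℓ` there is a
constant `k̄_{t,ℓ}` such that every balanced subset `S` of `N ⋊_φ Z_2` of size
`k > k̄_{t,ℓ}` (type `(k/2, k/2)`) contains a subset `T` of type `(ℓ/2, ℓ/2)` none of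
whose nonempty subsets of size `h ≤ t` admits an alternating parity ordering summing to
the identity. -/
theorem stmt5 (t : ℕ) (ht : 0 < t) (ℓ : ℕ) (hℓ : 0 < ℓ) (hℓe : Even ℓ) :
    ∃ kbar : ℕ, ∀ (N : Type*) [Group N] [Finite N] (φ : Z2 →* MulAut N)
      (S : Finset (N ⋊[φ] Z2)), kbar < S.card → Even S.card →
      HasType S (S.card / 2) (S.card / 2) →
      ∃ T ⊆ S, HasType T (ℓ / 2) (ℓ / 2) ∧
        ∀ Z ⊆ T, Z.Nonempty → Z.card ≤ t →
          ¬ ∃ l : List (N ⋊[φ] Z2),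
              l.Nodup ∧ (∀ x, x ∈ l ↔ x ∈ Z) ∧ AltList l ∧ l.prod = 1 := by
  classical
  refine ⟨2 * auxB ℓ + 1, ?_⟩
  intro N _ _ φ S hS hSe hty
  obtain ⟨h1, h2⟩ := hty
  unfold evenCount at h1
  have h3 := Finset.card_filter_add_card_filter_not (s := S)
    (fun g : N ⋊[φ] Z2 => g.right = 1)
  have hE : auxB ℓ < (S.filter (fun g => g.right = 1)).card := by
    have : (S.filter (fun g => g.right = 1)).card = S.card / 2 := by convert h1
    omega
  have hO : auxB ℓ < (S.filter (fun g => ¬ g.right = 1)).card := by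
    have : (S.filter (fun g => g.right = 1)).card = S.card / 2 := by convert h1
    omega
  have h0 : AuxFree (∅ : Finset (N ⋊[φ] Z2)) := by
    intro l _ hl _
    exact List.eq_nil_iff_forall_not_mem.2 (fun x hx => by simpa using hl x hx)
  obtain ⟨T1, hs1, hc1, -, hf1⟩ := aux_iter ℓ _ hE (ℓ / 2) ∅ h0 (by simp; omega)
  rw [Finset.empty_union] at hf1
  obtain ⟨T2, hs2, hc2, hd, hf2⟩ := aux_iter ℓ _ hO (ℓ / 2) T1 hf1 (by omega)
  refine ⟨T1 ∪ T2, ?_, ⟨?_, ?_⟩, ?_⟩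
  · exact Finset.union_subset (hs1.trans (Finset.filter_subset _ _))
      (hs2.trans (Finset.filter_subset _ _))
  · unfold evenCount
    rw [← hc1]
    congr 1
    ext x
    simp only [Finset.mem_filter, Finset.mem_union]
    constructor
    · rintro ⟨h | h, hx⟩
      · exact h
      · exact absurd hx (Finset.mem_filter.1 (hs2 h)).2
    · intro h
      exact ⟨Or.inl h, (Finset.mem_filter.1 (hs1 h)).2⟩
  · rw [Finset.card_union_of_disjoint hd, hc1, hc2]
  · rintro Z hZ ⟨z, hz⟩ - ⟨l, hnd, hl, -, hp⟩
    have := hf2 l hnd (fun x hx => hZ ((hl x).1 hx)) hp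
    subst this
    have := (hl z).2 hz
    simp at this
end

section
/- Let N be a finite group, let φ : Z_2 → Aut(N) be a group homomorphism, let G = N ⋊_φ Z_2, and let S ⊆ G \ {(0,0)} be a set of even size k and type (k/2, k/2). Let h and t be positive integers with k − h ≥ t + 2 and h ≥ t − 1. Then there exist h distinct elements y_1, …, y_h of S forming an alternating parity sequence such that, setting s_0 = (0,0) and s_i = y_1 + ⋯ + y_i, one has s_i ≠ s_j for all indices with 0 ≤ i < j ≤ min(h, i + t). -/
theorem aux_count (r a : ℕ) (m : ℕ) :
    2 * ((Finset.Ico a (a + m)).filter (fun j => j / 2 % 2 = r)).card ≤ m + 2 := by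
  induction m using Nat.strong_induction_on with
  | _ m ih =>
    have hs : ∀ q, ((Finset.Ico a (a + (q + 1))).filter (fun j => j / 2 % 2 = r)).card =
        ((Finset.Ico a (a + q)).filter (fun j => j / 2 % 2 = r)).card +
          if (a + q) / 2 % 2 = r then 1 else 0 := by
      intro q
      rw [← add_assoc, Nat.Ico_succ_right_eq_insert_Ico (by omega), Finset.filter_insert]
      split_ifs
      · rw [Finset.card_insert_of_notMem (by simp)]
      · simp
    have h0 : ((Finset.Ico a (a + 0)).filter (fun j => j / 2 % 2 = r)).card = 0 := by simp
    have hs0 := hs 0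
    rw [h0] at hs0
    simp only [Nat.zero_add, Nat.add_zero] at hs0 h0
    have hs1 := hs 1
    have hs2 := hs 2
    simp only [Nat.reduceAdd] at hs1 hs2
    match m, ih with
    | 0, _ => simp
    | 1, _ => split_ifs at hs0 <;> omega
    | 2, _ => split_ifs at hs0 hs1 <;> omega
    | 3, _ => split_ifs at hs0 hs1 hs2 <;> omega
    | q + 4, ih =>
      have := ih q (by omega)
      have h1 := hs q
      have h2 := hs (q + 1)
      have h3 := hs (q + 2)
      have h4 := hs (q + 3)
      simp only [add_assoc, Nat.reduceAdd] at h1 h2 h3 h4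
      clear hs0 hs1 hs2
      split_ifs at h1 h2 h3 h4 <;> omega

theorem aux_cast (a b : ℕ) : (Multiplicative.ofAdd (a : ZMod 2) : Z2) =
    Multiplicative.ofAdd (b : ZMod 2) ↔ a % 2 = b % 2 := by
  rw [Multiplicative.ofAdd.injective.eq_iff, ZMod.natCast_eq_natCast_iff']

theorem aux_prod {N : Type*} [Group N] {φ : Z2 →* MulAut N} (l : List (N ⋊[φ] Z2))
    (hl : ∀ i (hi : i < l.length), l[i].right = Multiplicative.ofAdd (i : ZMod 2)) (j : ℕ)
    (hj : j ≤ l.length) :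
    (l.take j).prod.right = Multiplicative.ofAdd ((j / 2 : ℕ) : ZMod 2) := by
  induction j with
  | zero => simp
  | succ j ih =>
    rw [List.prod_take_succ l j (by omega), SemidirectProduct.mul_right, ih (by omega), hl,
      ← ofAdd_add, ← Nat.cast_add, aux_cast]
    have : j % 4 = 0 ∨ j % 4 = 1 ∨ j % 4 = 2 ∨ j % 4 = 3 := by omega
    rcases this with h | h | h | h <;> omega

theorem aux_card {N : Type*} [Group N] {φ : Z2 →* MulAut N} (S : Finset (N ⋊[φ] Z2)) (k : ℕ)
    (hk : S.card = k) (hke : Even k) (htype : HasType S (k / 2) (k / 2)) (n : ℕ) :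
    2 * (S.filter (fun g => g.right = Multiplicative.ofAdd (n : ZMod 2))).card = k := by
  obtain ⟨h1, h2⟩ := htype
  unfold evenCount at h1
  have h3 := Finset.card_filter_add_card_filter_not (s := S) (fun g => g.right = 1)
  obtain ⟨c, hc⟩ := hke
  have e0 : ∀ z : Z2, z = 1 ↔ z = Multiplicative.ofAdd (0 : ZMod 2) := by decide
  have e1 : ∀ z : Z2, ¬ z = 1 ↔ z = Multiplicative.ofAdd (1 : ZMod 2) := by decide
  rcases Nat.mod_two_eq_zero_or_one n with hn | hn
  · have : (n : ZMod 2) = 0 := by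
      simpa using (ZMod.natCast_eq_natCast_iff' n 0 2).2 (by omega)
    rw [this]
    simp only [← e0]
    omega
  · have : (n : ZMod 2) = 1 := by
      simpa using (ZMod.natCast_eq_natCast_iff' n 1 2).2 (by omega)
    rw [this]
    simp only [← e1]
    omega

theorem aux_main {N : Type*} [Group N] (φ : Z2 →* MulAut N)
    (S : Finset (N ⋊[φ] Z2)) (k h t : ℕ) (hk : S.card = k) (hke : Even k)
    (htype : HasType S (k / 2) (k / 2)) (hhk : h + (t + 2) ≤ k) (n : ℕ) (hn : n ≤ h) :
    ∃ l : List (N ⋊[φ] Z2), l.length = n ∧ l.Nodup ∧ (∀ x ∈ l, x ∈ S) ∧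
      (∀ i (hi : i < l.length), l[i].right = Multiplicative.ofAdd (i : ZMod 2)) ∧
      ∀ i j : ℕ, i < j → j ≤ n → j ≤ i + t →
        (l.take i).prod ≠ (l.take j).prod := by
  classical
  induction n with
  | zero => exact ⟨[], by simp, by simp, by simp, by simp, by intros; omega⟩
  | succ n ih =>
    obtain ⟨l, hlen, hnd, hS, hpar, hw⟩ := ih (by omega)
    set J := (Finset.Ico (n + 1 - t) (n + 1 - t + t)).filter
      (fun j => j / 2 % 2 = (n + 1) / 2 % 2) with hJ
    set F := (Finset.range (n / 2)).image (fun i => l.getD (2 * i + n % 2) 1) ∪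
      J.image (fun j => l.prod⁻¹ * (l.take j).prod) with hF
    have hJc := aux_count ((n + 1) / 2 % 2) (n + 1 - t) t
    rw [← hJ] at hJc
    have hFc : F.card ≤ n / 2 + J.card := by
      refine (Finset.card_union_le _ _).trans (Nat.add_le_add ?_ Finset.card_image_le)
      simpa using Finset.card_image_le (s := Finset.range (n / 2))
        (f := fun i => l.getD (2 * i + n % 2) 1)
    have hSc := aux_card S k hk hke htype n
    obtain ⟨x, hxS, hxF⟩ := Finset.exists_mem_notMem_of_card_lt_card (s := F)
      (t := S.filter (fun g => g.right = Multiplicative.ofAdd (n : ZMod 2))) (by omega)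
    rw [Finset.mem_filter] at hxS
    obtain ⟨hxS, hxr⟩ := hxS
    rw [hF, Finset.mem_union, not_or] at hxF
    obtain ⟨hx1, hx2⟩ := hxF
    have hpar' : ∀ i (hi : i < (l ++ [x]).length),
        (l ++ [x])[i].right = Multiplicative.ofAdd (i : ZMod 2) := by
      intro i hi
      rw [List.getElem_append]
      split_ifs with h1
      · exact hpar i h1
      · have : i = n := by simp at hi; omega
        subst this
        simpa using hxr
    refine ⟨l ++ [x], by simp [hlen], ?_, ?_, hpar', ?_⟩
    · rw [← List.concat_eq_append, List.nodup_concat]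
      refine ⟨?_, hnd⟩
      intro hx
      obtain ⟨i, hi, rfl⟩ := List.getElem_of_mem hx
      apply hx1
      rw [hpar i hi, aux_cast] at hxr
      refine Finset.mem_image.2 ⟨i / 2, Finset.mem_range.2 (by omega), ?_⟩
      have : 2 * (i / 2) + n % 2 = i := by omega
      simp only [this]
      exact List.getD_eq_getElem _ _ hi
    · intro y hy
      rcases List.mem_append.1 hy with hy | hy
      · exact hS y hy
      · simp at hy; subst hy; exact hxS
    · intro i j hij hj hjt heq
      rcases Nat.lt_or_ge n j with hnj | hnj
      · have hjn : j = n + 1 := by omega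
        subst hjn
        have ri := aux_prod _ hpar' i (by simp; omega)
        have rj := aux_prod _ hpar' (n + 1) (by simp; omega)
        rw [heq, rj, aux_cast] at ri
        apply hx2
        refine Finset.mem_image.2 ⟨i, ?_, ?_⟩
        · rw [hJ, Finset.mem_filter, Finset.mem_Ico]
          omega
        · rw [List.take_append_of_le_length (by omega),
            List.take_of_length_le (l := l ++ [x]) (by simp; omega)] at heq
          simp [heq]
      · rw [List.take_append_of_le_length (by omega),
          List.take_append_of_le_length (by omega)] at heq
        exact hw i j hij hnj hjt heq

theorem stmt6 {N : Type*} [Group N] [Finite N] (φ : Z2 →* MulAut N)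
    (S : Finset (N ⋊[φ] Z2)) (hS1 : (1 : N ⋊[φ] Z2) ∉ S)
    (k h t : ℕ) (hk : S.card = k) (hke : Even k)
    (htype : HasType S (k / 2) (k / 2)) (ht : 0 < t) (hh : 0 < h)
    (hhk : h + (t + 2) ≤ k) (hht : t - 1 ≤ h) :
    ∃ l : List (N ⋊[φ] Z2), l.length = h ∧ l.Nodup ∧ (∀ x ∈ l, x ∈ S) ∧ AltList l ∧
      ∀ i j : ℕ, i < j → j ≤ min h (i + t) →
        (l.take i).prod ≠ (l.take j).prod := by
  obtain ⟨l, h1, h2, h3, h4, h5⟩ := aux_main φ S k h t hk hke htype hhk h le_rfl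
  refine ⟨l, h1, h2, h3, ?_, fun i j hij hj => h5 i j hij (by omega) (by omega)⟩
  unfold AltList
  refine List.isChain_iff_getElem.2 ?_
  intro i hi
  rw [h4, h4, Ne, aux_cast]
  omega
end

section
/- Let N be a finite group, let φ : Z_2 → Aut(N) be a group homomorphism, and let G = N ⋊_φ Z_2. Then every balanced subset of G \ {(0,0)} of size k ≥ 4 admits an alternating parity 3-weak sequencing. -/
theorem weak_cons {G : Type*} [Group G] (a : G) (l : List G) (h : WeakSeqList 3 l)
    (h0 : ∀ j, 1 ≤ j → j ≤ 3 → j ≤ (a :: l).length → ((a :: l).take j).prod ≠ 1) :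
    WeakSeqList 3 (a :: l) := by
  intro i j hij hj h3
  rcases i with _ | i
  · have := h0 j (by omega) (by omega) hj
    simpa using this.symm
  · rcases j with _ | j
    · omega
    · have := h i j (by omega) (by simpa using hj) (by omega)
      simpa using this

theorem z2_ne {a b c : Z2} (h1 : a ≠ b) (h2 : b ≠ c) : a = c := by
  revert a b c; decide

theorem z2_prod {a b : Z2} (h1 : a ≠ b) : a * b ≠ 1 := by
  revert a b; decide

theorem main_aux {N : Type*} [Group N] {φ : Z2 →* MulAut N} (os : List (N ⋊[φ] Z2)) :
    ∀ (o : N ⋊[φ] Z2) (E : Finset (N ⋊[φ] Z2)), (o :: os).Nodup →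
      (∀ x ∈ o :: os, x.right ≠ 1) → (∀ x ∈ E, x.right = 1) → (1 : N ⋊[φ] Z2) ∉ E →
      E.card = os.length + 1 →
      ∃ l : List (N ⋊[φ] Z2), (o :: l).Nodup ∧ (∀ x, x ∈ o :: l ↔ x ∈ o :: os ∨ x ∈ E) ∧
        AltList (o :: l) ∧ WeakSeqList 3 (o :: l) := by
  classical
  induction os with
  | nil =>
    intro o E hn ho hE h1 hc
    obtain ⟨e, rfl⟩ := Finset.card_eq_one.mp (by simpa using hc)
    have hoo : o.right ≠ 1 := ho o (by simp)
    have hee : e.right = 1 := hE e (by simp)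
    have hoe : o.right ≠ e.right := by rw [hee]; exact hoo
    have hne : o ≠ e := fun h => hoe (by rw [h])
    have he1 : e ≠ 1 := fun h => h1 (by simp [h])
    refine ⟨[e], by simpa using hne, by simp, List.IsChain.cons_cons hoe (List.IsChain.singleton _), ?_⟩
    apply weak_cons
    · apply weak_cons
      · intro i j _ hj _
        simp at hj; omega
      · intro j h1 h3 hj
        have : j = 1 := by simp at hj; omega
        subst this; simpa using he1
    · intro j h1 h3 hj
      have : j = 1 ∨ j = 2 := by simp at hj; omega
      rcases this with rfl | rfl
      · intro h; apply hoo
        have h : o = 1 := by simpa using h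
        simp [h]
      · intro h
        have h := congrArg SemidirectProduct.right h
        simp [hee] at h
        exact hoo h
  | cons o' os ih =>
    intro o E hn ho hE h1 hc
    have hoo : o.right ≠ 1 := ho o (by simp)
    have hoo' : o'.right ≠ 1 := ho o' (by simp)
    obtain ⟨e, heE, heg⟩ : ∃ e ∈ E, e ≠ o⁻¹ * o'⁻¹ :=
      Finset.exists_mem_ne (by simp at hc; omega) _
    have hee : e.right = 1 := hE e heE
    have he1 : e ≠ 1 := fun h => h1 (h ▸ heE)
    obtain ⟨l, hl1, hl2, hl3, hl4⟩ := ih o' (E.erase e) (List.nodup_cons.mp hn).2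
      (fun x hx => ho x (List.mem_cons_of_mem _ hx))
      (fun x hx => hE x (Finset.mem_of_mem_erase hx))
      (fun h => h1 (Finset.mem_of_mem_erase h))
      (by rw [Finset.card_erase_of_mem heE, hc]; simp)
    have hoe : o.right ≠ e.right := by rw [hee]; exact hoo
    have heo' : e.right ≠ o'.right := by rw [hee]; exact hoo'.symm
    have heno : e ∉ o' :: l := by
      rw [hl2]
      rintro (h | h)
      · exact ho e (List.mem_cons_of_mem _ h) hee
      · simp at h
    have hono : o ∉ o' :: l := by
      rw [hl2]
      rintro (h | h)
      · exact (List.nodup_cons.mp hn).1 h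
      · exact hoo (hE o (Finset.mem_of_mem_erase h))
    have hne : o ≠ e := fun h => hoe (by rw [h])
    refine ⟨e :: o' :: l, ?_, ?_, ?_, ?_⟩
    · refine List.nodup_cons.mpr ⟨?_, List.nodup_cons.mpr ⟨heno, hl1⟩⟩
      rw [List.mem_cons]; tauto
    · intro x
      rw [List.mem_cons, List.mem_cons (a := x) (b := e), hl2, List.mem_cons (b := o),
        Finset.mem_erase]
      by_cases hx : x = e
      · subst hx; tauto
      · tauto
    · exact List.IsChain.cons_cons hoe (List.IsChain.cons_cons heo' hl3)
    · apply weak_cons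
      · apply weak_cons _ _ hl4
        intro j h1 h3 hj h
        have : j = 1 ∨ j = 2 ∨ j = 3 := by omega
        rcases this with rfl | rfl | rfl
        · exact he1 (by simpa using h)
        · have h := congrArg SemidirectProduct.right h
          simp [hee] at h
          exact hoo' h
        · rcases l with _ | ⟨e', l⟩
          · simp at hj
          · have h := congrArg SemidirectProduct.right h
            have h2 : o'.right ≠ e'.right := (List.isChain_cons_cons.mp hl3).1
            simp [hee] at h
            exact z2_prod h2 h
      · intro j h1 h3 hj h
        have : j = 1 ∨ j = 2 ∨ j = 3 := by omega
        rcases this with rfl | rfl | rfl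
        · have h : o = 1 := by simpa using h
          exact hoo (by simp [h])
        · have h := congrArg SemidirectProduct.right h
          simp [hee] at h
          exact hoo h
        · apply heg
          have h : o * (e * o') = 1 := by simpa using h
          rw [← mul_assoc] at h
          have := eq_inv_of_mul_eq_one_left h
          rw [← this]; group

theorem stmt7 {N : Type*} [Group N] [Finite N] (φ : Z2 →* MulAut N)
    (S : Finset (N ⋊[φ] Z2)) (hS1 : (1 : N ⋊[φ] Z2) ∉ S)
    (hke : Even S.card) (htype : HasType S (S.card / 2) (S.card / 2))
    (hk4 : 4 ≤ S.card) :
    ∃ l : List (N ⋊[φ] Z2), IsOrderingOf l S ∧ AltList l ∧ WeakSeqList 3 l := by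
  obtain ⟨h1, h2⟩ := htype
  unfold evenCount at h1
  have h3 := Finset.card_filter_add_card_filter_not (s := S) (fun g => g.right = 1)
  have hlen := Finset.length_toList (S.filter (fun g => ¬ g.right = 1))
  have hnd := Finset.nodup_toList (S.filter (fun g => ¬ g.right = 1))
  have hmem : ∀ x, x ∈ (S.filter (fun g => ¬ g.right = 1)).toList ↔ x ∈ S ∧ ¬ x.right = 1 := by
    intro x; simp
  generalize (S.filter (fun g => ¬ g.right = 1)).toList = L at *
  rcases L with _ | ⟨o, os⟩
  · simp at hlen; omega
  · obtain ⟨l, hl1, hl2, hl3, hl4⟩ := main_aux os o (S.filter (fun g => g.right = 1)) hnd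
      (fun x hx => ((hmem x).1 hx).2) (fun x hx => (Finset.mem_filter.1 hx).2)
      (fun h => hS1 (Finset.mem_filter.1 h).1) (by simp at hlen; omega)
    refine ⟨o :: l, ⟨hl1, fun x => ?_⟩, hl3, hl4⟩
    rw [hl2, hmem, Finset.mem_filter]
    tauto
end

section
/- Let N be a finite group of odd order, let φ : Z_2 → Aut(N) be a group homomorphism, let G = N ⋊_φ Z_2, and let k ≥ 18 be an even integer. If every subset of G \ {(0,0)} of type (k/2 − 5, k/2 − 5) admits an alternating parity 4-weak sequencing, then every subset of G \ {(0,0)} of type (k/2, k/2) admits an alternating parity 4-weak sequencing. -/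
section Sel
variable {G : Type*} [Group G]

theorem x10_pick (S : Finset G) (L : List G) (h : L.length < S.card) : ∃ x ∈ S, x ∉ L := by
  classical
  have h1 : L.toFinset.card < S.card := lt_of_le_of_lt (List.toFinset_card_le L) h
  obtain ⟨x, hx, hx'⟩ := Finset.exists_mem_notMem_of_card_lt_card h1
  exact ⟨x, hx, by simpa using hx'⟩

theorem x10_a1 {x u v : G} (h : x ≠ (u * v)⁻¹) : x * u * v ≠ 1 := by
  intro h'; apply h; rw [mul_assoc] at h'; exact eq_inv_of_mul_eq_one_left h'
theorem x10_a2 {x u v w : G} (h : x ≠ (u * v * w)⁻¹) : x * u * v * w ≠ 1 := by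
  intro h'; apply h; apply eq_inv_of_mul_eq_one_left; simpa [mul_assoc] using h'
theorem x10_b1 {x u v : G} (h : x ≠ u⁻¹ * v⁻¹) : u * x * v ≠ 1 := by
  intro h'; apply h
  rw [eq_inv_mul_iff_mul_eq]; exact eq_inv_of_mul_eq_one_left h'
theorem x10_b2 {x u v w : G} (h : x ≠ u⁻¹ * (v * w)⁻¹) : u * x * v * w ≠ 1 := by
  intro h'; apply h
  rw [eq_inv_mul_iff_mul_eq]; apply eq_inv_of_mul_eq_one_left; simpa [mul_assoc] using h'
theorem x10_c1 {x u v : G} (h : x ≠ (u * v)⁻¹) : u * v * x ≠ 1 := by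
  intro h'; apply h; exact eq_inv_of_mul_eq_one_right h'
theorem x10_c2 {x u v w : G} (h : x ≠ (u * v)⁻¹ * w⁻¹) : u * v * x * w ≠ 1 := by
  intro h'; apply h; rw [eq_inv_mul_iff_mul_eq]; exact eq_inv_of_mul_eq_one_left h'
theorem x10_d2 {x u v w : G} (h : x ≠ (u * v * w)⁻¹) : u * v * w * x ≠ 1 := by
  intro h'; apply h; exact eq_inv_of_mul_eq_one_right h'

open scoped Pointwise in
theorem x10_five [DecidableEq G] {a b c d h : G} (hab : a ≠ b) (hac : a ≠ c) (had : a ≠ d)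
    (hbc : b ≠ c) (hbd : b ≠ d) (hcd : c ≠ d) (ha : a ≠ 1) (hb : b ≠ 1) (hc : c ≠ 1) (hd : d ≠ 1)
    (hh : h ≠ 1) (hst : ∀ x ∈ ({1, a, b, c, d} : Finset G), x * h ∈ ({1, a, b, c, d} : Finset G)) :
    a * b * c * d = 1 := by
  set Y : Finset G := {1, a, b, c, d} with hY
  have hcard : Y.card = 5 := by
    rw [hY]
    rw [Finset.card_insert_of_notMem, Finset.card_insert_of_notMem, Finset.card_insert_of_notMem,
      Finset.card_insert_of_notMem, Finset.card_singleton] <;>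
      simp [*, Ne.symm ha, Ne.symm hb, Ne.symm hc, Ne.symm hd]
  have hpow : ∀ n : ℕ, ∀ x ∈ Y, x * h ^ n ∈ Y := by
    intro n
    induction n with
    | zero => intro x hx; simpa using hx
    | succ n ih => intro x hx; rw [pow_succ, ← mul_assoc]; exact hst _ (ih x hx)
  have h1Y : (1 : G) ∈ Y := by simp [hY]
  have hfin : IsOfFinOrder h := by
    by_contra hinf
    have hinj : Function.Injective (fun n : ℕ => h ^ n) := injective_pow_iff_not_isOfFinOrder.mpr hinf
    have : Set.Infinite (Set.range (fun n : ℕ => h ^ n)) := Set.infinite_range_of_injective hinj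
    apply this
    apply Set.Finite.subset (Finset.finite_toSet Y)
    rintro _ ⟨n, rfl⟩
    simpa using hpow n 1 h1Y
  have hz : ∀ z ∈ Subgroup.zpowers h, ∃ n, n < orderOf h ∧ h ^ n = z := by
    intro z hz
    have := hfin.mem_zpowers_iff_mem_range_orderOf.mp hz
    simpa using this
  have hmul : ((Y : Set G) * (Subgroup.zpowers h : Set G)) = (Y : Set G) := by
    ext z
    constructor
    · rintro ⟨y, hy, w, hw, rfl⟩
      obtain ⟨n, -, rfl⟩ := hz w hw
      exact hpow n y hy
    · intro hy
      exact ⟨z, hy, 1, Subgroup.one_mem _, by simp⟩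
  have hc5 := Subgroup.card_mul_eq_card_subgroup_mul_card_quotient (Subgroup.zpowers h) (Y : Set G)
  rw [hmul] at hc5
  have e5 : Nat.card (Y : Set G) = 5 := by simp [hcard]
  rw [e5, Nat.card_zpowers] at hc5
  have hdvd : orderOf h ∣ 5 := ⟨_, hc5⟩
  have ho : orderOf h = 5 := by
    rcases (Nat.dvd_prime (by norm_num : Nat.Prime 5)).mp hdvd with h1 | h1
    · exact absurd (orderOf_eq_one_iff.mp h1) hh
    · exact h1
  have hsub : (Finset.range 5).image (fun n => h ^ n) ⊆ Y := by
    intro z hz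
    obtain ⟨n, -, rfl⟩ := Finset.mem_image.mp hz
    simpa using hpow n 1 h1Y
  have himc : ((Finset.range 5).image (fun n => h ^ n)).card = 5 := by
    rw [Finset.card_image_of_injOn]
    · simp
    · intro i hi j hj hij
      exact pow_injOn_Iio_orderOf (by simpa [ho] using hi) (by simpa [ho] using hj) hij
  have heq := Finset.eq_of_subset_of_card_le hsub (by rw [himc, hcard])
  have key : ∀ x ∈ Y, ∃ n, n < 5 ∧ h ^ n = x := by
    intro x hx
    rw [← heq] at hx
    simpa using hx
  obtain ⟨i, hi, ra⟩ := key a (by simp [hY])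
  obtain ⟨j, hj, rb⟩ := key b (by simp [hY])
  obtain ⟨k, hk, rc⟩ := key c (by simp [hY])
  obtain ⟨l, hl, rd⟩ := key d (by simp [hY])
  have n1 : i ≠ j := by rintro rfl; exact hab (ra.symm.trans rb)
  have n2 : i ≠ k := by rintro rfl; exact hac (ra.symm.trans rc)
  have n3 : i ≠ l := by rintro rfl; exact had (ra.symm.trans rd)
  have n4 : j ≠ k := by rintro rfl; exact hbc (rb.symm.trans rc)
  have n5 : j ≠ l := by rintro rfl; exact hbd (rb.symm.trans rd)
  have n6 : k ≠ l := by rintro rfl; exact hcd (rc.symm.trans rd)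
  have z1 : i ≠ 0 := by rintro rfl; exact ha (by simpa using ra.symm)
  have z2 : j ≠ 0 := by rintro rfl; exact hb (by simpa using rb.symm)
  have z3 : k ≠ 0 := by rintro rfl; exact hc (by simpa using rc.symm)
  have z4 : l ≠ 0 := by rintro rfl; exact hd (by simpa using rd.symm)
  have hs : i + j + k + l = 5 * 2 := by omega
  rw [← ra, ← rb, ← rc, ← rd, ← pow_add, ← pow_add, ← pow_add, hs, pow_mul, ← ho, pow_orderOf_eq_one,
    one_pow]

theorem x10_last [DecidableEq G] {O : Finset G} {a b c d f f' u1 u2 u3 u4 : G} (hO : 9 ≤ O.card)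
    (hab : a ≠ b) (hac : a ≠ c) (had : a ≠ d)
    (hbc : b ≠ c) (hbd : b ≠ d) (hcd : c ≠ d) (ha : a ≠ 1) (hb : b ≠ 1) (hc : c ≠ 1) (hd : d ≠ 1)
    (hff : f ≠ f') (habcd : a * b * c * d ≠ 1) :
    ∃ v, (v = f ∨ v = f') ∧ ∃ u ∈ O, u ∉ [u1, u2, u3, u4] ∧
      u ∉ [(u4 * v)⁻¹, (u4 * v)⁻¹ * a⁻¹, (u4 * v)⁻¹ * b⁻¹, (u4 * v)⁻¹ * c⁻¹, (u4 * v)⁻¹ * d⁻¹] := by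
  by_contra hcon
  push Not at hcon
  set R : Finset G := O \ [u1, u2, u3, u4].toFinset with hR
  have hRc : 5 ≤ R.card := by
    have := Finset.le_card_sdiff [u1, u2, u3, u4].toFinset O
    have h4 : [u1, u2, u3, u4].toFinset.card ≤ 4 := List.toFinset_card_le _
    rw [hR]
    omega
  have main : ∀ v, (v = f ∨ v = f') → R = [(u4 * v)⁻¹, (u4 * v)⁻¹ * a⁻¹, (u4 * v)⁻¹ * b⁻¹,
      (u4 * v)⁻¹ * c⁻¹, (u4 * v)⁻¹ * d⁻¹].toFinset := by
    intro v hv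
    apply Finset.eq_of_subset_of_card_le
    · intro u hu
      rw [hR, Finset.mem_sdiff, List.mem_toFinset] at hu
      rw [List.mem_toFinset]
      exact hcon v hv u hu.1 hu.2
    · exact le_trans (List.toFinset_card_le _) hRc
  have e1 := main f (Or.inl rfl)
  have e2 := main f' (Or.inr rfl)
  have key : ∀ x ∈ ({1, a, b, c, d} : Finset G),
      x * ((u4 * f) * (u4 * f')⁻¹) ∈ ({1, a, b, c, d} : Finset G) := by
    intro x hx
    have hmem : (u4 * f)⁻¹ * x⁻¹ ∈ R := by
      rw [e1]
      simp only [Finset.mem_insert, Finset.mem_singleton] at hx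
      rcases hx with rfl | rfl | rfl | rfl | rfl <;> simp
    rw [e2] at hmem
    have h2 : ∃ y ∈ ({1, a, b, c, d} : Finset G), (u4 * f)⁻¹ * x⁻¹ = (u4 * f')⁻¹ * y⁻¹ := by
      simp only [List.mem_toFinset, List.mem_cons, List.not_mem_nil, or_false] at hmem
      rcases hmem with h | h | h | h | h
      · exact ⟨1, by simp, by simpa using h⟩
      · exact ⟨a, by simp, h⟩
      · exact ⟨b, by simp, h⟩
      · exact ⟨c, by simp, h⟩
      · exact ⟨d, by simp, h⟩
    obtain ⟨y, hy, hxy⟩ := h2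
    have : x * ((u4 * f) * (u4 * f')⁻¹) = y := by
      have h3 := congrArg (fun t => t⁻¹) hxy
      simp only [mul_inv_rev, inv_inv] at h3
      rw [← mul_assoc, mul_inv_eq_iff_eq_mul]
      simpa using h3
    rw [this]; exact hy
  refine habcd (x10_five hab hac had hbc hbd hcd ha hb hc hd ?_ key)
  intro h
  rw [mul_inv_eq_one] at h
  exact hff (mul_left_cancel h)

structure X10Sel (E O : Finset G) (a b c d f u1 u2 u3 u4 u5 : G) : Prop where
  ma : a ∈ E
  mb : b ∈ E
  mc : c ∈ E
  md : d ∈ E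
  mf : f ∈ E
  m1 : u1 ∈ O
  m2 : u2 ∈ O
  m3 : u3 ∈ O
  m4 : u4 ∈ O
  m5 : u5 ∈ O
  ndE : [a, b, c, d, f].Nodup
  ndO : [u1, u2, u3, u4, u5].Nodup
  t1 : u1 * a * u2 ≠ 1
  t2 : u1 * b * u2 ≠ 1
  t3 : u1 * c * u2 ≠ 1
  t4 : u2 * b * u3 ≠ 1
  t5 : u2 * c * u3 ≠ 1
  t6 : u3 * c * u4 ≠ 1
  t7 : u3 * d * u4 ≠ 1
  t8 : u4 * f * u5 ≠ 1
  q1 : u1 * a * u2 * b ≠ 1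
  q2 : u1 * a * u2 * c ≠ 1
  q3 : u1 * a * u2 * d ≠ 1
  q4 : u1 * b * u2 * a ≠ 1
  q5 : u1 * b * u2 * c ≠ 1
  q6 : u1 * c * u2 * a ≠ 1
  q7 : u1 * c * u2 * b ≠ 1
  r1 : u2 * b * u3 * a ≠ 1
  r2 : u2 * c * u3 * a ≠ 1
  r3 : u2 * b * u3 * c ≠ 1
  r4 : u2 * c * u3 * b ≠ 1
  r5 : u2 * b * u3 * d ≠ 1
  r6 : u2 * c * u3 * d ≠ 1
  s1 : u3 * c * u4 * b ≠ 1
  s2 : u3 * d * u4 * c ≠ 1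
  s3 : u3 * d * u4 * b ≠ 1
  s4 : u3 * c * u4 * f ≠ 1
  s5 : u3 * d * u4 * f ≠ 1
  v1 : u4 * f * u5 * a ≠ 1
  v2 : u4 * f * u5 * b ≠ 1
  v3 : u4 * f * u5 * c ≠ 1
  v4 : u4 * f * u5 * d ≠ 1

theorem x10_select (E O : Finset G) (hE : 9 ≤ E.card) (hO : 9 ≤ O.card) (h1 : (1 : G) ∉ E) :
    ∃ a b c d f u1 u2 u3 u4 u5 : G, X10Sel E O a b c d f u1 u2 u3 u4 u5 := by
  classical
  obtain ⟨a, ma, -⟩ := x10_pick E [] (by rw [List.length_nil]; omega)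
  obtain ⟨b, mb, hb⟩ := x10_pick E [a] (by simp; omega)
  obtain ⟨u2, m2, -⟩ := x10_pick O [] (by rw [List.length_nil]; omega)
  obtain ⟨u1, m1, h1'⟩ := x10_pick O [u2, (a * u2)⁻¹, (b * u2)⁻¹, (a * u2 * b)⁻¹, (b * u2 * a)⁻¹]
    (by simp; omega)
  obtain ⟨c, mc, hc⟩ := x10_pick E [a, b, u1⁻¹ * u2⁻¹, (u1 * a * u2)⁻¹, u1⁻¹ * (u2 * a)⁻¹,
    u1⁻¹ * (u2 * b)⁻¹, (u1 * b * u2)⁻¹] (by simp; omega)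
  obtain ⟨u3, m3, h3⟩ := x10_pick O [u1, u2, (u2 * b)⁻¹, (u2 * c)⁻¹, (u2 * b)⁻¹ * a⁻¹,
    (u2 * c)⁻¹ * a⁻¹, (u2 * b)⁻¹ * c⁻¹, (u2 * c)⁻¹ * b⁻¹] (by simp; omega)
  obtain ⟨d, md, hd⟩ := x10_pick E [a, b, c, (u1 * a * u2)⁻¹, (u2 * c * u3)⁻¹, (u2 * b * u3)⁻¹,
    (a * b * c)⁻¹] (by simp; omega)
  obtain ⟨u4, m4, h4⟩ := x10_pick O [u1, u2, u3, (u3 * c)⁻¹, (u3 * d)⁻¹, (u3 * c)⁻¹ * b⁻¹,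
    (u3 * d)⁻¹ * c⁻¹, (u3 * d)⁻¹ * b⁻¹] (by simp; omega)
  obtain ⟨f, mf, hf⟩ := x10_pick E [a, b, c, d, (u3 * c * u4)⁻¹, (u3 * d * u4)⁻¹] (by simp; omega)
  obtain ⟨f', mf', hf'⟩ := x10_pick E [f, a, b, c, d, (u3 * c * u4)⁻¹, (u3 * d * u4)⁻¹]
    (by simp; omega)
  have n1 : ∀ x ∈ E, x ≠ 1 := by rintro x hx rfl; exact h1 hx
  simp only [List.mem_cons, List.not_mem_nil, or_false, not_or] at hb h1' hc h3 hd h4 hf hf'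
  obtain ⟨c1, c2, c3, c4, c5, c6, c7⟩ := hc
  obtain ⟨d1, d2, d3, d4, d5, d6, d7⟩ := hd
  obtain ⟨k1, k2, k3, k4, k5⟩ := h1'
  obtain ⟨l1, l2, l3, l4, l5, l6, l7, l8⟩ := h3
  obtain ⟨p1, p2, p3, p4, p5, p6, p7, p8⟩ := h4
  obtain ⟨v, hv, u5, m5, h5, h5'⟩ := x10_last (O := O) (u1 := u1) (u2 := u2) (u3 := u3) (u4 := u4) hO
    (Ne.symm hb) (Ne.symm c1) (Ne.symm d1) (Ne.symm c2) (Ne.symm d2) (Ne.symm d3)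
    (n1 a ma) (n1 b mb) (n1 c mc) (n1 d md) (Ne.symm hf'.1) (x10_d2 d7)
  have hvE : v ∈ E ∧ v ≠ a ∧ v ≠ b ∧ v ≠ c ∧ v ≠ d ∧ v ≠ (u3 * c * u4)⁻¹ ∧ v ≠ (u3 * d * u4)⁻¹ := by
    rcases hv with rfl | rfl
    · exact ⟨mf, hf⟩
    · exact ⟨mf', hf'.2⟩
  obtain ⟨mv, w1, w2, w3, w4, w5, w6⟩ := hvE
  simp only [List.mem_cons, List.not_mem_nil, or_false, not_or] at h5 h5'
  obtain ⟨x1, x2, x3, x4⟩ := h5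
  obtain ⟨y1, y2, y3, y4, y5⟩ := h5'
  refine ⟨a, b, c, d, v, u1, u2, u3, u4, u5, ?_⟩
  constructor
  all_goals first
    | assumption
    | (apply x10_a1; assumption)
    | (apply x10_a2; assumption)
    | (apply x10_b1; assumption)
    | (apply x10_b2; assumption)
    | (apply x10_c1; assumption)
    | (apply x10_c2; assumption)
    | (apply x10_d2; assumption)
    | skip
  · simp [Ne.symm hb, Ne.symm c1, Ne.symm d1, Ne.symm c2, Ne.symm d2, Ne.symm d3, Ne.symm w1,
      Ne.symm w2, Ne.symm w3, Ne.symm w4]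
  · simp [k1, Ne.symm l1, Ne.symm l2, Ne.symm p1, Ne.symm p2, Ne.symm p3, Ne.symm x1,
      Ne.symm x2, Ne.symm x3, Ne.symm x4]
end Sel

section Words
variable {G : Type*} [Group G] (p : G →* Multiplicative (ZMod 2))

def X10W (x : G) : List G → Prop
  | [] => x ≠ 1
  | [b] => x ≠ 1 ∧ p x ≠ p b
  | [b, c] => x ≠ 1 ∧ p x ≠ p b ∧ x * b * c ≠ 1
  | b :: c :: d :: _ => x ≠ 1 ∧ p x ≠ p b ∧ x * b * c ≠ 1 ∧ x * b * c * d ≠ 1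

def X10R : List G → Prop
  | [] => True
  | x :: l => X10W p x l ∧ X10R l

variable {p}

theorem x10_W_long {x q r s : G} {l w w' : List G} (h : X10W p x (l ++ q :: r :: s :: w)) :
    X10W p x (l ++ q :: r :: s :: w') := by
  match l, h with
  | [], h => exact h
  | [_], h => exact h
  | [_, _], h => exact h
  | _ :: _ :: _ :: _, h => exact h

theorem x10_glue {q r s : G} {w : List G} : ∀ l : List G, X10R p (l ++ [q, r, s]) →
    X10R p (q :: r :: s :: w) → X10R p (l ++ q :: r :: s :: w)
  | [], _, h2 => h2
  | _ :: l, h1, h2 => ⟨x10_W_long h1.1, x10_glue l h1.2 h2⟩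

theorem x10_W_pre {x : G} {l m : List G} (h : X10W p x (l ++ m)) : X10W p x l := by
  match l, m, h with
  | [], [], h => exact h
  | [], [_], h => exact h.1
  | [], [_, _], h => exact h.1
  | [], _ :: _ :: _ :: _, h => exact h.1
  | [_], [], h => exact h
  | [_], [_], h => exact ⟨h.1, h.2.1⟩
  | [_], _ :: _ :: _, h => exact ⟨h.1, h.2.1⟩
  | [_, _], [], h => exact h
  | [_, _], _ :: _, h => exact ⟨h.1, h.2.1, h.2.2.1⟩
  | _ :: _ :: _ :: _, _, h => exact h

theorem x10_pre {m : List G} : ∀ l : List G, X10R p (l ++ m) → X10R p l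
  | [], _ => trivial
  | _ :: l, h => ⟨x10_W_pre h.1, x10_pre l h.2⟩

theorem x10_suf {m : List G} : ∀ l : List G, X10R p (l ++ m) → X10R p m
  | [], h => h
  | _ :: l, h => x10_suf l h.2

theorem x10_Rne {x : G} {l : List G} (h : X10R p (x :: l)) : x ≠ 1 :=
  x10_W_pre (l := []) (m := l) h.1

/-- odd value -/
def x10w : Multiplicative (ZMod 2) := Multiplicative.ofAdd 1

theorem x10_w1 : x10w ≠ 1 := by decide
theorem x10_ww : x10w * x10w = 1 := by decide
theorem x10_dich (z : Multiplicative (ZMod 2)) : z = 1 ∨ z = x10w := by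
  revert z; decide

theorem x10_odd1 {x : G} (h : p x = x10w) : x ≠ 1 := by
  rintro rfl; rw [map_one] at h; exact x10_w1 h.symm
theorem x10_eo {x y : G} (h : p x = 1) (h' : p y = x10w) : p x ≠ p y := by
  rw [h, h']; exact x10_w1.symm
theorem x10_oe {x y : G} (h : p x = x10w) (h' : p y = 1) : p x ≠ p y := by
  rw [h, h']; exact x10_w1
theorem x10_odd3 {x y z : G} (h : p x = 1) (h' : p y = x10w) (h'' : p z = 1) : x * y * z ≠ 1 := by
  apply x10_odd1 (p := p); simp [h, h', h'']
theorem x10_rot {x y z t : G} (h : y * z * t * x ≠ 1) : x * y * z * t ≠ 1 := by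
  intro h'; apply h
  have : x * (y * z * t) = 1 := by simpa [mul_assoc] using h'
  exact mul_eq_one_comm.mp this

theorem x10_A {o2 e o x u1 f1 u2 f2 u3 f3 u4 f u5 : G}
    (po2 : p o2 = x10w) (pe : p e = 1) (po : p o = x10w) (px : p x = 1)
    (p1 : p u1 = x10w) (p2 : p u2 = x10w) (p3 : p u3 = x10w) (p4 : p u4 = x10w) (p5 : p u5 = x10w)
    (pf1 : p f1 = 1) (pf2 : p f2 = 1) (pf3 : p f3 = 1) (pf : p f = 1)
    (ne : e ≠ 1) (nx : x ≠ 1) (nf1 : f1 ≠ 1) (nf2 : f2 ≠ 1) (nf3 : f3 ≠ 1) (nf : f ≠ 1)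
    (c0 : o2 * e * o ≠ 1) (c1 : o2 * e * o * x ≠ 1) (c2 : e * o * x * u1 ≠ 1)
    (c3 : o * x * u1 ≠ 1) (c4 : o * x * u1 * f1 ≠ 1) (c5 : u1 * f1 * u2 * x ≠ 1)
    (d1 : u1 * f1 * u2 ≠ 1) (d2 : u2 * f2 * u3 ≠ 1) (d3 : u3 * f3 * u4 ≠ 1) (d4 : u4 * f * u5 ≠ 1)
    (g1 : u1 * f1 * u2 * f2 ≠ 1) (g2 : u2 * f2 * u3 * f1 ≠ 1) (g3 : u2 * f2 * u3 * f3 ≠ 1)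
    (g4 : u3 * f3 * u4 * f2 ≠ 1) (g5 : u3 * f3 * u4 * f ≠ 1) (g6 : u4 * f * u5 * f3 ≠ 1) :
    X10R p [o2, e, o, x, u1, f1, u2, f2, u3, f3, u4, f, u5] := by
  simp only [X10R, X10W]
  refine ⟨?_, ?_, ?_, ?_, ?_, ?_, ?_, ?_, ?_, ?_, ?_, ?_, ?_, trivial⟩
  all_goals (repeat' apply And.intro)
  all_goals first
    | assumption
    | (apply x10_eo <;> assumption)
    | (apply x10_oe <;> assumption)
    | (apply x10_odd3 (p := p) <;> assumption)
    | (apply x10_rot; assumption)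
    | (apply x10_odd1 (p := p); assumption)

theorem x10_B {o1 e2 o2 x u1 f1 u2 f2 u3 f3 u4 f u5 : G}
    (po1 : p o1 = x10w) (pe : p e2 = 1) (po : p o2 = x10w) (px : p x = 1)
    (p1 : p u1 = x10w) (p2 : p u2 = x10w) (p3 : p u3 = x10w) (p4 : p u4 = x10w) (p5 : p u5 = x10w)
    (pf1 : p f1 = 1) (pf2 : p f2 = 1) (pf3 : p f3 = 1) (pf : p f = 1)
    (ne : e2 ≠ 1) (nx : x ≠ 1) (nf1 : f1 ≠ 1) (nf2 : f2 ≠ 1) (nf3 : f3 ≠ 1) (nf : f ≠ 1)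
    (c0 : o1 * e2 * o2 ≠ 1) (c1 : x * o1 * e2 * o2 ≠ 1) (c2 : u5 * x * o1 ≠ 1)
    (c3 : u5 * x * o1 * e2 ≠ 1) (c4 : f * u5 * x * o1 ≠ 1) (c5 : u4 * f * u5 * x ≠ 1)
    (d1 : u1 * f1 * u2 ≠ 1) (d2 : u2 * f2 * u3 ≠ 1) (d3 : u3 * f3 * u4 ≠ 1) (d4 : u4 * f * u5 ≠ 1)
    (g1 : u1 * f1 * u2 * f2 ≠ 1) (g2 : u2 * f2 * u3 * f1 ≠ 1) (g3 : u2 * f2 * u3 * f3 ≠ 1)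
    (g4 : u3 * f3 * u4 * f2 ≠ 1) (g5 : u3 * f3 * u4 * f ≠ 1) (g6 : u4 * f * u5 * f3 ≠ 1) :
    X10R p [u1, f1, u2, f2, u3, f3, u4, f, u5, x, o1, e2, o2] := by
  simp only [X10R, X10W]
  refine ⟨?_, ?_, ?_, ?_, ?_, ?_, ?_, ?_, ?_, ?_, ?_, ?_, ?_, trivial⟩
  all_goals (repeat' apply And.intro)
  all_goals first
    | assumption
    | (apply x10_eo <;> assumption)
    | (apply x10_oe <;> assumption)
    | (apply x10_odd3 (p := p) <;> assumption)
    | (apply x10_rot; assumption)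
    | (apply x10_odd1 (p := p); assumption)

theorem x10_C {o2 e o g u1 f1 u2 f2 u3 f3 u4 f u5 x : G}
    (po2 : p o2 = x10w) (pe : p e = 1) (po : p o = x10w) (pg : p g = 1) (px : p x = 1)
    (p1 : p u1 = x10w) (p2 : p u2 = x10w) (p3 : p u3 = x10w) (p4 : p u4 = x10w) (p5 : p u5 = x10w)
    (pf1 : p f1 = 1) (pf2 : p f2 = 1) (pf3 : p f3 = 1) (pf : p f = 1)
    (ne : e ≠ 1) (ng : g ≠ 1) (nx : x ≠ 1) (nf1 : f1 ≠ 1) (nf2 : f2 ≠ 1) (nf3 : f3 ≠ 1)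
    (nf : f ≠ 1)
    (c0 : o2 * e * o ≠ 1) (c1 : o2 * e * o * g ≠ 1) (c2 : e * o * g * u1 ≠ 1)
    (c3 : o * g * u1 ≠ 1) (c4 : o * g * u1 * f1 ≠ 1) (c5 : g * u1 * f1 * u2 ≠ 1)
    (c6 : u4 * f * u5 * x ≠ 1)
    (d1 : u1 * f1 * u2 ≠ 1) (d2 : u2 * f2 * u3 ≠ 1) (d3 : u3 * f3 * u4 ≠ 1) (d4 : u4 * f * u5 ≠ 1)
    (g1 : u1 * f1 * u2 * f2 ≠ 1) (g2 : u2 * f2 * u3 * f1 ≠ 1) (g3 : u2 * f2 * u3 * f3 ≠ 1)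
    (g4 : u3 * f3 * u4 * f2 ≠ 1) (g5 : u3 * f3 * u4 * f ≠ 1) (g6 : u4 * f * u5 * f3 ≠ 1) :
    X10R p [o2, e, o, g, u1, f1, u2, f2, u3, f3, u4, f, u5, x] := by
  simp only [X10R, X10W]
  refine ⟨?_, ?_, ?_, ?_, ?_, ?_, ?_, ?_, ?_, ?_, ?_, ?_, ?_, ?_, trivial⟩
  all_goals (repeat' apply And.intro)
  all_goals first
    | assumption
    | (apply x10_eo <;> assumption)
    | (apply x10_oe <;> assumption)
    | (apply x10_odd3 (p := p) <;> assumption)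
    | (apply x10_rot; assumption)
    | (apply x10_odd1 (p := p); assumption)

open scoped Classical in
theorem x10_perm {T : Type*} {l m : List T} (h : ∀ x, l.count x = m.count x) : l.Perm m :=
  List.perm_iff_count.mpr h

theorem x10_pig {a b c d s1 s2 s3 s4 g : G} (hnd : [a, b, c, d].Nodup)
    (ha : a ∈ [s1, s2, s3, s4]) (hb : b ∈ [s1, s2, s3, s4]) (hc : c ∈ [s1, s2, s3, s4])
    (hd : d ∈ [s1, s2, s3, s4]) (hg : g ∉ [a, b, c, d]) :
    g ≠ s1 ∧ g ≠ s2 ∧ g ≠ s3 ∧ g ≠ s4 := by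
  classical
  have hsub : [a, b, c, d].toFinset ⊆ [s1, s2, s3, s4].toFinset := by
    intro x hx
    simp only [List.mem_toFinset] at hx ⊢
    simp only [List.mem_cons, List.not_mem_nil, or_false] at hx
    rcases hx with rfl | rfl | rfl | rfl <;> assumption
  have heq := Finset.eq_of_subset_of_card_le hsub (by
    rw [List.toFinset_card_of_nodup hnd]; exact List.toFinset_card_le _)
  have key : ∀ s ∈ [s1, s2, s3, s4], g ≠ s := by
    rintro s hs rfl
    apply hg
    rw [← List.mem_toFinset, heq, List.mem_toFinset]; exact hs
  exact ⟨key _ (by simp), key _ (by simp), key _ (by simp), key _ (by simp)⟩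

section Main
variable {E O : Finset G} {a b c d f u1 u2 u3 u4 u5 : G}

theorem x10_step1 (hs : X10Sel E O a b c d f u1 u2 u3 u4 u5)
    (hE : ∀ x ∈ E, x ≠ 1 ∧ p x = 1) (hO : ∀ x ∈ O, p x = x10w)
    {K : List G} {o2 e o g : G} (hg : g ∉ [a, b, c, d]) (pg : p g = 1)
    (po2 : p o2 = x10w) (pe : p e = 1) (po : p o = x10w)
    (hR : X10R p (g :: (K ++ [o2, e, o]))) :
    ∃ L : List G, X10R p L ∧ L.Perm (g :: (K ++ [o2, e, o]) ++ [a, b, c, d, f, u1, u2, u3, u4, u5]) := by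
  classical
  obtain ⟨ma, mb, mc, md, mf, m1, m2, m3, m4, m5, ndE, ndO, t1, t2, t3, t4, t5, t6, t7, t8,
    q1, q2, q3, q4, q5, q6, q7, r1, r2, r3, r4, r5, r6, s1, s2, s3, s4, s5, v1, v2, v3, v4⟩ := hs
  obtain ⟨na, pa⟩ := hE a ma
  obtain ⟨nb, pb⟩ := hE b mb
  obtain ⟨nc, pc⟩ := hE c mc
  obtain ⟨nd, pd⟩ := hE d md
  obtain ⟨nf, pf⟩ := hE f mf
  have p1 := hO _ m1
  have p2 := hO _ m2
  have p3 := hO _ m3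
  have p4 := hO _ m4
  have p5 := hO _ m5
  have ng : g ≠ 1 := x10_Rne hR
  have hKR : X10R p (K ++ [o2, e, o]) := hR.2
  have h3 : X10R p [o2, e, o] := x10_suf K hKR
  have c0 : o2 * e * o ≠ 1 := h3.1.2.2
  have ne : e ≠ 1 := h3.2.1.1
  have fin : ∀ w T : List G, X10R p (o2 :: e :: o :: w) → w.Perm T →
      ∃ L : List G, X10R p L ∧ L.Perm (g :: (K ++ [o2, e, o]) ++ T) := by
    intro w T hw hp
    refine ⟨(g :: K) ++ o2 :: e :: o :: w, x10_glue (g :: K) hR hw, ?_⟩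
    have : (g :: K) ++ o2 :: e :: o :: w = g :: (K ++ [o2, e, o]) ++ w := by simp
    rw [this]
    exact hp.append_left _
  have fin2 : ∀ w T : List G, X10R p (o2 :: e :: o :: g :: w) → w.Perm T →
      ∃ L : List G, X10R p L ∧ L.Perm (g :: (K ++ [o2, e, o]) ++ T) := by
    intro w T hw hp
    refine ⟨K ++ o2 :: e :: o :: g :: w, x10_glue K hKR hw, ?_⟩
    have : K ++ o2 :: e :: o :: g :: w = (K ++ [o2, e, o]) ++ g :: w := by simp
    rw [this, List.cons_append]
    exact List.perm_middle.trans ((hp.append_left _).cons _)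
  have hab : a ≠ b := by rintro rfl; simp at ndE
  have hac : a ≠ c := by rintro rfl; simp at ndE
  have hbc : b ≠ c := by rintro rfl; simp at ndE
  have nd4 : [a, b, c, d].Nodup := by
    have : ([a, b, c, d] ++ [f]).Nodup := ndE
    exact (List.nodup_append.mp this).1
  by_cases k1 : o2 * e * o * d ≠ 1 ∧ e * o * d * u1 ≠ 1 ∧ o * d * u1 ≠ 1 ∧ o * d * u1 * a ≠ 1
  · obtain ⟨i1, i2, i3, i4⟩ := k1
    refine fin [d, u1, a, u2, b, u3, c, u4, f, u5] _ (by apply x10_A <;> assumption) ?_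
    exact x10_perm (fun x => by simp only [List.count_cons]; omega)
  by_cases k2 : o2 * e * o * b ≠ 1 ∧ e * o * b * u1 ≠ 1 ∧ o * b * u1 ≠ 1 ∧ o * b * u1 * a ≠ 1
  · obtain ⟨i1, i2, i3, i4⟩ := k2
    refine fin [b, u1, a, u2, c, u3, d, u4, f, u5] _ (by apply x10_A <;> assumption) ?_
    exact x10_perm (fun x => by simp only [List.count_cons]; omega)
  by_cases k3 : o2 * e * o * c ≠ 1 ∧ e * o * c * u1 ≠ 1 ∧ o * c * u1 ≠ 1 ∧ o * c * u1 * a ≠ 1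
  · obtain ⟨i1, i2, i3, i4⟩ := k3
    refine fin [c, u1, a, u2, b, u3, d, u4, f, u5] _ (by apply x10_A <;> assumption) ?_
    exact x10_perm (fun x => by simp only [List.count_cons]; omega)
  by_cases k4 : o2 * e * o * a ≠ 1 ∧ e * o * a * u1 ≠ 1 ∧ o * a * u1 ≠ 1 ∧ o * a * u1 * c ≠ 1
  · obtain ⟨i1, i2, i3, i4⟩ := k4
    refine fin [a, u1, c, u2, b, u3, d, u4, f, u5] _ (by apply x10_A <;> assumption) ?_
    exact x10_perm (fun x => by simp only [List.count_cons]; omega)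
  by_cases k5 : o2 * e * o * a ≠ 1 ∧ e * o * a * u1 ≠ 1 ∧ o * a * u1 ≠ 1 ∧ o * a * u1 * b ≠ 1
  · obtain ⟨i1, i2, i3, i4⟩ := k5
    refine fin [a, u1, b, u2, c, u3, d, u4, f, u5] _ (by apply x10_A <;> assumption) ?_
    exact x10_perm (fun x => by simp only [List.count_cons]; omega)
  have conv : ∀ x, ¬ (o2 * e * o * x ≠ 1 ∧ e * o * x * u1 ≠ 1 ∧ o * x * u1 ≠ 1 ∧
      o * x * u1 * a ≠ 1) →
      x ∈ [(o2 * e * o)⁻¹, (e * o)⁻¹ * u1⁻¹, o⁻¹ * u1⁻¹, o⁻¹ * (u1 * a)⁻¹] := by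
    intro x hx
    by_contra hx'
    simp only [List.mem_cons, List.not_mem_nil, or_false, not_or] at hx'
    exact hx ⟨x10_d2 hx'.1, x10_c2 hx'.2.1, x10_b1 hx'.2.2.1, x10_b2 hx'.2.2.2⟩
  have ha : ¬ (o2 * e * o * a ≠ 1 ∧ e * o * a * u1 ≠ 1 ∧ o * a * u1 ≠ 1 ∧
      o * a * u1 * a ≠ 1) := by
    rintro ⟨j1, j2, j3, -⟩
    have y1 : o * a * u1 * c = 1 := by
      by_contra h; exact k4 ⟨j1, j2, j3, h⟩
    have y2 : o * a * u1 * b = 1 := by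
      by_contra h; exact k5 ⟨j1, j2, j3, h⟩
    exact hbc (mul_left_cancel (y2.trans y1.symm))
  obtain ⟨z1, z2, z3, z4⟩ := x10_pig nd4 (conv a ha) (conv b k2) (conv c k3) (conv d k1) hg
  have i1 := x10_d2 z1
  have i2 := x10_c2 z2
  have i3 := x10_b1 z3
  have i4 := x10_b2 z4
  by_cases y : g * u1 * a * u2 = 1
  · have yc : g * u1 * c * u2 ≠ 1 := by
      intro h; exact hac (mul_left_cancel (mul_right_cancel (y.trans h.symm)))
    have yb : g * u1 * b * u2 ≠ 1 := by
      intro h; exact hab (mul_left_cancel (mul_right_cancel (y.trans h.symm)))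
    by_cases z : o * g * u1 * c = 1
    · have zb : o * g * u1 * b ≠ 1 := by
        intro h; exact hbc (mul_left_cancel (h.trans z.symm))
      refine fin2 [u1, b, u2, c, u3, d, u4, f, u5, a] _ (by apply x10_C <;> assumption) ?_
      exact x10_perm (fun x => by simp only [List.count_cons]; omega)
    · refine fin2 [u1, c, u2, b, u3, d, u4, f, u5, a] _ (by apply x10_C <;> assumption) ?_
      exact x10_perm (fun x => by simp only [List.count_cons]; omega)
  · refine fin2 [u1, a, u2, c, u3, d, u4, f, u5, b] _ (by apply x10_C <;> assumption) ?_
    exact x10_perm (fun x => by simp only [List.count_cons]; omega)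
theorem x10_step2 (hs : X10Sel E O a b c d f u1 u2 u3 u4 u5)
    (hE : ∀ x ∈ E, x ≠ 1 ∧ p x = 1) (hO : ∀ x ∈ O, p x = x10w)
    {K K' : List G} {o1 e2 o2 o3 e o g : G} (hg : g ∉ [a, b, c, d]) (pg : p g = 1)
    (po1 : p o1 = x10w) (pe2 : p e2 = 1) (po2 : p o2 = x10w)
    (po3 : p o3 = x10w) (pe : p e = 1) (po : p o = x10w)
    (hK : o1 :: e2 :: o2 :: K = K' ++ [o3, e, o])
    (hR : X10R p (o1 :: e2 :: o2 :: (K ++ [g]))) :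
    ∃ L : List G, X10R p L ∧
      L.Perm (o1 :: e2 :: o2 :: (K ++ [g]) ++ [a, b, c, d, f, u1, u2, u3, u4, u5]) := by
  classical
  have hs' := hs
  obtain ⟨ma, mb, mc, md, mf, m1, m2, m3, m4, m5, ndE, ndO, t1, t2, t3, t4, t5, t6, t7, t8,
    q1, q2, q3, q4, q5, q6, q7, r1, r2, r3, r4, r5, r6, s1, s2, s3, s4, s5, v1, v2, v3, v4⟩ := hs
  obtain ⟨na, pa⟩ := hE a ma
  obtain ⟨nb, pb⟩ := hE b mb
  obtain ⟨nc, pc⟩ := hE c mc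
  obtain ⟨nd, pd⟩ := hE d md
  obtain ⟨nf, pf⟩ := hE f mf
  have p1 := hO _ m1
  have p2 := hO _ m2
  have p3 := hO _ m3
  have p4 := hO _ m4
  have p5 := hO _ m5
  have hg1 : X10R p [g] := x10_suf (o1 :: e2 :: o2 :: K) hR
  have ng : g ≠ 1 := x10_Rne hg1
  have hKR : X10R p (o1 :: e2 :: o2 :: K) := x10_pre (m := [g]) (o1 :: e2 :: o2 :: K) hR
  have h3 : X10R p [o1, e2, o2] := x10_pre (m := K) [o1, e2, o2] hKR
  have c0 : o1 * e2 * o2 ≠ 1 := h3.1.2.2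
  have ne : e2 ≠ 1 := h3.2.1.1
  have fin : ∀ w T : List G, X10R p (w ++ [o1, e2, o2]) → w.Perm T →
      ∃ L : List G, X10R p L ∧ L.Perm (o1 :: e2 :: o2 :: (K ++ [g]) ++ T) := by
    intro w T hw hp
    refine ⟨w ++ o1 :: e2 :: o2 :: (K ++ [g]), x10_glue w hw hR, ?_⟩
    exact List.perm_append_comm.trans (hp.append_left _)
  have nd4 : [a, b, c, d].Nodup := by
    have : ([a, b, c, d] ++ [f]).Nodup := ndE
    exact (List.nodup_append.mp this).1
  by_cases k1 : b * o1 * e2 * o2 ≠ 1 ∧ u5 * b * o1 ≠ 1 ∧ u5 * b * o1 * e2 ≠ 1 ∧ f * u5 * b * o1 ≠ 1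
  · obtain ⟨i1, i2, i3, i4⟩ := k1
    refine fin [u1, a, u2, c, u3, d, u4, f, u5, b] _ (by apply x10_B <;> assumption) ?_
    exact x10_perm (fun x => by simp only [List.count_cons]; omega)
  by_cases k2 : c * o1 * e2 * o2 ≠ 1 ∧ u5 * c * o1 ≠ 1 ∧ u5 * c * o1 * e2 ≠ 1 ∧ f * u5 * c * o1 ≠ 1
  · obtain ⟨i1, i2, i3, i4⟩ := k2
    refine fin [u1, a, u2, b, u3, d, u4, f, u5, c] _ (by apply x10_B <;> assumption) ?_
    exact x10_perm (fun x => by simp only [List.count_cons]; omega)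
  by_cases k3 : a * o1 * e2 * o2 ≠ 1 ∧ u5 * a * o1 ≠ 1 ∧ u5 * a * o1 * e2 ≠ 1 ∧ f * u5 * a * o1 ≠ 1
  · obtain ⟨i1, i2, i3, i4⟩ := k3
    refine fin [u1, c, u2, b, u3, d, u4, f, u5, a] _ (by apply x10_B <;> assumption) ?_
    exact x10_perm (fun x => by simp only [List.count_cons]; omega)
  by_cases k4 : d * o1 * e2 * o2 ≠ 1 ∧ u5 * d * o1 ≠ 1 ∧ u5 * d * o1 * e2 ≠ 1 ∧ f * u5 * d * o1 ≠ 1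
  · obtain ⟨i1, i2, i3, i4⟩ := k4
    refine fin [u1, a, u2, b, u3, c, u4, f, u5, d] _ (by apply x10_B <;> assumption) ?_
    exact x10_perm (fun x => by simp only [List.count_cons]; omega)
  have conv : ∀ x, ¬ (x * o1 * e2 * o2 ≠ 1 ∧ u5 * x * o1 ≠ 1 ∧ u5 * x * o1 * e2 ≠ 1 ∧
      f * u5 * x * o1 ≠ 1) →
      x ∈ [(o1 * e2 * o2)⁻¹, u5⁻¹ * o1⁻¹, u5⁻¹ * (o1 * e2)⁻¹, (f * u5)⁻¹ * o1⁻¹] := by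
    intro x hx
    by_contra hx'
    simp only [List.mem_cons, List.not_mem_nil, or_false, not_or] at hx'
    exact hx ⟨x10_a2 hx'.1, x10_b1 hx'.2.1, x10_b2 hx'.2.2.1, x10_c2 hx'.2.2.2⟩
  have z := (x10_pig nd4 (conv a k3) (conv b k1) (conv c k2) (conv d k4) hg).1
  have hR2 : X10R p (g :: (K' ++ [o3, e, o])) := by
    rw [← hK]
    exact ⟨⟨ng, x10_eo pg po1, x10_odd3 pg po1 pe2, x10_a2 z⟩, hKR⟩
  obtain ⟨L, hL, hLp⟩ := x10_step1 hs' hE hO hg pg po3 pe po hR2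
  refine ⟨L, hL, hLp.trans ?_⟩
  rw [← hK]
  apply List.Perm.append_right
  exact (List.perm_append_singleton g (o1 :: e2 :: o2 :: K)).symm
end Main

theorem x10_alt2 {x y : G} (h : p x ≠ p y) (hx : p x = x10w) : p y = 1 := by
  rcases x10_dich (p y) with h' | h'
  · exact h'
  · exact absurd (hx.trans h'.symm) h
theorem x10_alt1 {x y : G} (h : p x ≠ p y) (hx : p x = 1) : p y = x10w := by
  rcases x10_dich (p y) with h' | h'
  · exact absurd (hx.trans h'.symm) h
  · exact h'

theorem x10_Wp {x y : G} {l : List G} (h : X10W p x (y :: l)) : p x ≠ p y :=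
  (x10_W_pre (l := [y]) (m := l) h).2

theorem x10_ends {z : G} : ∀ (m : List G) (x : G), Even m.length → X10R p (x :: (m ++ [z])) →
    p x ≠ p z
  | [], x, _, h => x10_Wp h.1
  | [_], x, h, _ => by simp at h
  | b :: c :: m, x, hm, h => by
    have hm' : Even m.length := by
      simp only [List.length_cons] at hm
      rw [Nat.even_iff] at hm ⊢; omega
    have ih := x10_ends m c hm' h.2.2
    have h1 : p x ≠ p b := x10_Wp h.1
    have h2 : p b ≠ p c := x10_Wp h.2.1
    rcases x10_dich (p x) with e | e
    · have e1 := x10_alt1 h1 e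
      have e2 := x10_alt2 h2 e1
      exact x10_eo e (x10_alt1 ih e2)
    · have e1 := x10_alt2 h1 e
      have e2 := x10_alt1 h2 e1
      exact x10_oe e (x10_alt2 ih e2)

theorem x10_last3 (l : List G) (h : 3 ≤ l.length) : ∃ K q r s, l = K ++ [q, r, s] := by
  have : ∃ s r q K, l.reverse = s :: r :: q :: K := by
    have h' : 3 ≤ l.reverse.length := by simpa using h
    match l.reverse, h' with
    | s :: r :: q :: K, _ => exact ⟨s, r, q, K, rfl⟩
    | [], h' => simp at h'
    | [_], h' => simp at h'
    | [_, _], h' => simp at h'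
  obtain ⟨s, r, q, K, hK⟩ := this
  refine ⟨K.reverse, q, r, s, ?_⟩
  have := congrArg List.reverse hK
  simpa using this

theorem x10_main {E O : Finset G} {a b c d f u1 u2 u3 u4 u5 : G}
    (hs : X10Sel E O a b c d f u1 u2 u3 u4 u5)
    (hE : ∀ x ∈ E, x ≠ 1 ∧ p x = 1) (hO : ∀ x ∈ O, p x = x10w)
    {l : List G} (hl : ∀ g ∈ l, g ∉ [a, b, c, d]) (hl8 : 8 ≤ l.length) (hle : Even l.length)
    (hR : X10R p l) :
    ∃ L : List G, X10R p L ∧ L.Perm (l ++ [a, b, c, d, f, u1, u2, u3, u4, u5]) := by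
  obtain ⟨x, l', rfl⟩ : ∃ x l', l = x :: l' := by
    cases l with
    | nil => simp at hl8
    | cons x l' => exact ⟨x, l', rfl⟩
  simp only [List.length_cons] at hl8 hle
  rcases x10_dich (p x) with hx | hx
  · obtain ⟨K, q, r, s, rfl⟩ := x10_last3 l' (by omega)
    have h3 : X10R p [q, r, s] := x10_suf (x :: K) hR
    have hend : p x ≠ p s := by
      apply x10_ends (K ++ [q, r]) x
      · simp only [List.length_append, List.length_cons, List.length_nil] at hle ⊢
        rw [Nat.even_iff] at hle ⊢; omega
      · simpa using hR
    have ps := x10_alt1 hend hx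
    have pr := x10_alt2 h3.2.1.2.symm ps
    have pq := x10_alt1 h3.1.2.1.symm pr
    exact x10_step1 hs hE hO (hl x (by simp)) hx pq pr ps hR
  · obtain ⟨K0, q, r, s, rfl⟩ := x10_last3 l' (by omega)
    have hend : p x ≠ p s := by
      apply x10_ends (K0 ++ [q, r]) x
      · simp only [List.length_append, List.length_cons, List.length_nil] at hle ⊢
        rw [Nat.even_iff] at hle ⊢; omega
      · simpa using hR
    have ps := x10_alt2 hend hx
    obtain ⟨y, z, K1, rfl⟩ : ∃ y z K1, K0 = y :: z :: K1 := by
      match K0, hl8 with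
      | y :: z :: K1, _ => exact ⟨y, z, K1, rfl⟩
      | [], h => simp at h
      | [_], h => simp at h
    have py := x10_alt2 (x10_Wp hR.1) hx
    have pz := x10_alt1 (x10_Wp hR.2.1) py
    have hform : x :: (y :: z :: K1 ++ [q, r, s]) = x :: y :: z :: ((K1 ++ [q, r]) ++ [s]) := by simp
    obtain ⟨K', o3, e, o, hK⟩ := x10_last3 (x :: y :: z :: (K1 ++ [q, r])) (by simp)
    have h4 : X10R p [o3, e, o, s] := by
      apply x10_suf K'
      have : K' ++ [o3, e, o, s] = (K' ++ [o3, e, o]) ++ [s] := by simp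
      rw [this, ← hK]; simpa using hR
    have po := x10_alt1 h4.2.2.1.2.symm ps
    have pe := x10_alt2 h4.2.1.2.1.symm po
    have po3 := x10_alt1 h4.1.2.1.symm pe
    rw [hform]
    exact x10_step2 hs hE hO (hl s (by simp)) ps hx py pz po3 pe po hK (by rw [← hform]; exact hR)
end Words

section Conv
variable {G : Type*} [Group G] {p : G →* Multiplicative (ZMod 2)}

theorem x10_weak_tail {x : G} {l : List G} (h : WeakSeqList 4 (x :: l)) : WeakSeqList 4 l := by
  intro i j hij hj ht he
  apply h (i + 1) (j + 1) (by omega) (by simpa using hj) (by omega)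
  simp [he]

theorem x10_toR : ∀ l : List G, l.IsChain (fun a b => p a ≠ p b) → WeakSeqList 4 l → X10R p l
  | [], _, _ => trivial
  | x :: l, hc, hw => by
    refine ⟨?_, x10_toR l hc.tail (x10_weak_tail hw)⟩
    match l, hc, hw with
    | [], hc, hw =>
      have h1 := hw 0 1 (by simp) (by simp) (by simp)
      simp at h1
      exact Ne.symm h1
    | [b], hc, hw =>
      have h1 := hw 0 1 (by simp) (by simp) (by simp)
      simp at h1
      exact ⟨Ne.symm h1, (List.isChain_cons_cons.mp hc).1⟩
    | [b, c], hc, hw =>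
      have h1 := hw 0 1 (by simp) (by simp) (by simp)
      have h3 := hw 0 3 (by simp) (by simp) (by simp)
      simp [← mul_assoc] at h1 h3
      exact ⟨Ne.symm h1, (List.isChain_cons_cons.mp hc).1, Ne.symm h3⟩
    | b :: c :: d :: l, hc, hw =>
      have h1 := hw 0 1 (by simp) (by simp) (by simp)
      have h3 := hw 0 3 (by simp) (by simp) (by simp)
      have h4 := hw 0 4 (by simp) (by simp) (by simp)
      simp [← mul_assoc] at h1 h3 h4
      exact ⟨Ne.symm h1, (List.isChain_cons_cons.mp hc).1, Ne.symm h3, Ne.symm h4⟩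

theorem x10_chain : ∀ l : List G, X10R p l → l.IsChain (fun a b => p a ≠ p b)
  | [], _ => List.isChain_nil
  | [x], _ => List.isChain_singleton x
  | x :: y :: l, h => List.isChain_cons_cons.mpr ⟨x10_Wp h.1, x10_chain (y :: l) h.2⟩

theorem x10_mul2 {x y : G} (h : p x ≠ p y) : x * y ≠ 1 := by
  intro h'
  have h2 : p x * p y = 1 := by rw [← map_mul, h', map_one]
  apply h
  revert h2
  generalize p x = z
  generalize p y = w
  revert z w
  decide

theorem x10_weak : ∀ l : List G, X10R p l → WeakSeqList 4 l
  | [], _ => by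
    intro i j hij hj
    simp at hj; omega
  | x :: l, h => by
    have ih := x10_weak l h.2
    intro i j hij hj ht he
    obtain ⟨j, rfl⟩ : ∃ j', j = j' + 1 := ⟨j - 1, by omega⟩
    cases i with
    | succ i =>
      apply ih i j (by omega) (by simpa using hj) (by omega)
      simpa using he
    | zero =>
      have hj4 : j < 4 := by omega
      have hW := h.1
      simp only [List.take_zero, List.prod_nil, List.take_succ_cons, List.prod_cons] at he
      simp only [List.length_cons] at hj
      match l, hW, hj with
      | [], hW, hj =>
        simp at he
        exact hW he.symm
      | [b], hW, hj =>
        have := x10_mul2 hW.2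
        simp only [List.length_cons, List.length_nil] at hj
        have hj2 : j < 2 := by omega
        interval_cases j
        · simp at he; exact hW.1 he.symm
        · simp at he; exact this he.symm
      | [b, c], hW, hj =>
        have := x10_mul2 hW.2.1
        simp only [List.length_cons, List.length_nil] at hj
        have hj2 : j < 3 := by omega
        interval_cases j
        · simp at he; exact hW.1 he.symm
        · simp at he; exact this he.symm
        · simp [← mul_assoc] at he; exact hW.2.2 he.symm
      | b :: c :: d :: l, hW, hj =>
        have := x10_mul2 hW.2.1
        interval_cases j
        · simp at he; exact hW.1 he.symm
        · simp at he; exact this he.symm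
        · simp [← mul_assoc] at he; exact hW.2.2.1 he.symm
        · simp [← mul_assoc] at he; exact hW.2.2.2 he.symm
end Conv

theorem stmt10 {N : Type*} [Group N] [Finite N] (hodd : Odd (Nat.card N))
    (φ : Z2 →* MulAut N) (k : ℕ) (hke : Even k) (hk18 : 18 ≤ k)
    (H : ∀ S' : Finset (N ⋊[φ] Z2), (1 : N ⋊[φ] Z2) ∉ S' →
      HasType S' (k / 2 - 5) (k / 2 - 5) →
      ∃ l : List (N ⋊[φ] Z2), IsOrderingOf l S' ∧ AltList l ∧ WeakSeqList 4 l) :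
    ∀ S : Finset (N ⋊[φ] Z2), (1 : N ⋊[φ] Z2) ∉ S →
      HasType S (k / 2) (k / 2) →
      ∃ l : List (N ⋊[φ] Z2), IsOrderingOf l S ∧ AltList l ∧ WeakSeqList 4 l := by
  classical
  intro S h1 hT
  obtain ⟨hTe, hTc⟩ := hT
  unfold evenCount at hTe
  set n := k / 2 with hn
  have hn9 : 9 ≤ n := by omega
  let p : (N ⋊[φ] Z2) →* Multiplicative (ZMod 2) := SemidirectProduct.rightHom
  have hp : ∀ x, p x = x.right := fun x => rfl
  let E := S.filter (fun g => g.right = 1)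
  let O := S.filter (fun g => ¬ g.right = 1)
  have hEO : E.card + O.card = S.card := Finset.card_filter_add_card_filter_not _
  have hEc : E.card = n := hTe
  obtain ⟨a, b, c, d, f, u1, u2, u3, u4, u5, hs⟩ := x10_select E O (by omega) (by omega)
    (by simp [E, h1])
  have hE : ∀ x ∈ E, x ≠ 1 ∧ p x = 1 := by
    intro x hx
    have := Finset.mem_filter.mp hx
    refine ⟨?_, this.2⟩
    rintro rfl; exact h1 this.1
  have hO : ∀ x ∈ O, p x = x10w := by
    intro x hx
    have := Finset.mem_filter.mp hx
    rcases x10_dich (p x) with h | h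
    · exact absurd h this.2
    · exact h
  set TE : List (N ⋊[φ] Z2) := [a, b, c, d, f] with hTE
  set TO : List (N ⋊[φ] Z2) := [u1, u2, u3, u4, u5] with hTO
  have hTEE : ∀ x ∈ TE, x ∈ E := by
    intro x hx
    simp only [hTE, List.mem_cons, List.not_mem_nil, or_false] at hx
    rcases hx with rfl | rfl | rfl | rfl | rfl
    exacts [hs.ma, hs.mb, hs.mc, hs.md, hs.mf]
  have hTOO : ∀ x ∈ TO, x ∈ O := by
    intro x hx
    simp only [hTO, List.mem_cons, List.not_mem_nil, or_false] at hx
    rcases hx with rfl | rfl | rfl | rfl | rfl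
    exacts [hs.m1, hs.m2, hs.m3, hs.m4, hs.m5]
  have hnd : (TE ++ TO).Nodup := by
    rw [List.nodup_append]
    refine ⟨hs.ndE, hs.ndO, ?_⟩
    rintro x hx y hy rfl
    exact (Finset.mem_filter.mp (hTOO x hy)).2 (Finset.mem_filter.mp (hTEE x hx)).2
  have hTS : ∀ x ∈ TE ++ TO, x ∈ S := by
    intro x hx
    rcases List.mem_append.mp hx with hx | hx
    · exact (Finset.mem_filter.mp (hTEE x hx)).1
    · exact (Finset.mem_filter.mp (hTOO x hx)).1
  let S' := S \ (TE ++ TO).toFinset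
  have hS'c : S'.card = n - 5 + (n - 5) := by
    have hsub : (TE ++ TO).toFinset ⊆ S := by
      intro x hx; exact hTS x (List.mem_toFinset.mp hx)
    rw [Finset.card_sdiff_of_subset hsub, List.toFinset_card_of_nodup hnd, hTc]
    simp [hTE, hTO]; omega
  have hS'e : evenCount S' = n - 5 := by
    have : S'.filter (fun g => g.right = 1) = E \ TE.toFinset := by
      ext x
      simp only [S', E, Finset.mem_filter, Finset.mem_sdiff, List.mem_toFinset, List.mem_append,
        not_or]
      constructor
      · rintro ⟨⟨h1, h2, h3⟩, h4⟩; exact ⟨⟨h1, h4⟩, h2⟩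
      · rintro ⟨⟨h1, h4⟩, h2⟩
        exact ⟨⟨h1, h2, fun h => (Finset.mem_filter.mp (hTOO x h)).2 h4⟩, h4⟩
    have hsub : TE.toFinset ⊆ E := by
      intro x hx; exact hTEE x (List.mem_toFinset.mp hx)
    unfold evenCount
    rw [this, Finset.card_sdiff_of_subset hsub, List.toFinset_card_of_nodup hs.ndE, hEc]
    simp [hTE]
  obtain ⟨l, ⟨hlnd, hlm⟩, hla, hlw⟩ := H S' (by simp [S', h1]) ⟨hS'e, hS'c⟩
  have hlS : l.toFinset = S' := by ext x; simp [hlm]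
  have hlen : l.length = n - 5 + (n - 5) := by
    rw [← hS'c, ← hlS, List.toFinset_card_of_nodup hlnd]
  have hR : X10R p l := x10_toR l hla hlw
  have hlT : ∀ x ∈ l, x ∉ TE ++ TO := by
    intro x hx
    have := Finset.mem_sdiff.mp ((hlm x).mp hx)
    simpa using this.2
  obtain ⟨L, hL, hLp⟩ := x10_main hs hE hO (l := l) (by
      intro g hg hg'
      apply hlT g hg
      simp only [hTE, List.mem_append, List.mem_cons, List.not_mem_nil, or_false] at hg' ⊢
      tauto) (by omega) (by rw [hlen]; exact ⟨_, rfl⟩) hR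
  have hLp' : L.Perm (l ++ (TE ++ TO)) := hLp
  refine ⟨L, ⟨?_, ?_⟩, x10_chain L hL, x10_weak L hL⟩
  · rw [hLp'.nodup_iff, List.nodup_append]
    refine ⟨hlnd, hnd, ?_⟩
    rintro x hx y hy rfl
    exact hlT x hx hy
  · intro x
    rw [hLp'.mem_iff, List.mem_append, hlm]
    constructor
    · rintro (h | h)
      · exact (Finset.mem_sdiff.mp h).1
      · exact hTS x h
    · intro h
      by_cases hx : x ∈ TE ++ TO
      · exact Or.inr hx
      · exact Or.inl (Finset.mem_sdiff.mpr ⟨h, by simpa using hx⟩)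
end
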